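/- arXiv:2008.00653 — 4 statements merged into one kernel-verified Lean document; each statement's English description precedes it below -/
import Mathlib

section
/- Let ρ > 0, c ∈ ℝ³, and let f : B̄(c,ρ) → ℂ be harmonic in the open ball B(c,ρ) and continuous on the closed ball B̄(c,ρ). Then for every nonnegative integer p, the p-th order local expansion satisfies ‖L_c^p[f]‖_∞ ≤ Λ_p ‖f‖_∞, where both supremum norms are taken over B̄(c,ρ) and Λ_p is the Lebesgue constant of the degree-p Fourier–Laplace projection on the unit sphere. -/
/-!
Each regular solid harmonic `R_n^m` is the restriction to `ℝ³` of a polynomial killed by the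
Laplacian: Rodrigues' formula gives `R_n^m` as a scalar multiple of `(x ± i y)^{|m|}` times the
homogenization by `‖x‖²` of the `(n+|m|)`-th derivative of `(t² - 1)^n` (`solidR_eq_ev`), and the
Laplacian of that explicit sum telescopes to zero (`lap_solidPoly`). Hence the local expansion is a
harmonic polynomial in `x - c`, and the maximum modulus principle (`ev_max_principle`) reduces the
bound on the closed ball to the sphere of radius `ρ`. There the powers of `ρ` cancel and the
expansion equals the Fourier–Laplace projection of `ξ ↦ f (c + ρ ξ)` (`localExp_sphere`), which is
bounded by the Lebesgue constant times the supremum of `|f|` over that sphere.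

Since `lebesgueConst` is an infimum, it obeys the bound only if the set of admissible constants is
nonempty; this holds because the two-dimensional Hausdorff measure of `S²` is finite
(`hausdorff_S2_lt_top`) and the `Y_n^m` are bounded (`fourierProj_bounded`). Orthonormality of the
`Y_n^m`, hence the normalization of the Hausdorff measure, is irrelevant.
-/


open MeasureTheory Metric Filter Asymptotics Real

noncomputable section

namespace Paper

/-- `E3` is three-dimensional Euclidean space `ℝ³`. -/
abbrev E3 : Type := EuclideanSpace ℝ (Fin 3)

/-- The Legendre polynomial of degree `n`, via Rodrigues' formula. -/
def legendreP (n : ℕ) (x : ℝ) : ℝ :=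
  (1 / ((2 : ℝ) ^ n * n.factorial)) * iteratedDeriv n (fun t : ℝ => (t ^ 2 - 1) ^ n) x

/-- The associated Legendre function `P_n^m` for natural-number order `m`. -/
def assocLegendreNat (n m : ℕ) (x : ℝ) : ℝ :=
  (-1 : ℝ) ^ m * (1 - x ^ 2) ^ ((m : ℝ) / 2) * iteratedDeriv m (legendreP n) x

/-- The associated Legendre function `P_n^m` for integer order `m`. -/
def assocLegendre (n : ℕ) (m : ℤ) (x : ℝ) : ℝ :=
  if 0 ≤ m then assocLegendreNat n m.toNat x
  else
    (-1 : ℝ) ^ (-m).toNat *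
      (((n - (-m).toNat).factorial : ℝ) / ((n + (-m).toNat).factorial : ℝ)) *
      assocLegendreNat n (-m).toNat x

/-- The normalization constant `A_n^m = √((2n+1)/(4π) · (n−m)!/(n+m)!)`. -/
def normA (n : ℕ) (m : ℤ) : ℝ :=
  Real.sqrt ((2 * n + 1) / (4 * π) *
    ((((n : ℤ) - m).toNat.factorial : ℝ) / (((n : ℤ) + m).toNat.factorial : ℝ)))

/-- The spherical harmonic `Y_n^m`, viewed as a function of a unit vector `ξ ∈ S²`:
`Y_n^m(ξ) = A_n^m e^{imφ} P_n^m(cos θ)`, where `cos θ = ξ₃` and `φ` is the azimuthal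
angle of `ξ`. -/
def sphHarm (n : ℕ) (m : ℤ) (ξ : E3) : ℂ :=
  ((normA n m : ℝ) : ℂ) *
    Complex.exp ((m : ℂ) * ((Complex.arg ((ξ 0 : ℂ) + (ξ 1 : ℂ) * Complex.I) : ℝ) : ℂ) *
      Complex.I) *
    ((assocLegendre n m (ξ 2) : ℝ) : ℂ)

/-- The regular solid harmonic `R_n^m(x) = ‖x‖^n Y_n^m(x/‖x‖)` (with `R_n^m(0) = 0` for
`n > 0` and `R_0^0 ≡ 1/√(4π)`; these values are produced automatically at `x = 0`). -/
def solidR (n : ℕ) (m : ℤ) (x : E3) : ℂ :=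
  ((‖x‖ ^ n : ℝ) : ℂ) * sphHarm n m (‖x‖⁻¹ • x)

/-- The irregular solid harmonic `I_n^m(x) = ‖x‖^{-(n+1)} Y_n^m(x/‖x‖)` (for `x ≠ 0`). -/
def solidI (n : ℕ) (m : ℤ) (x : E3) : ℂ :=
  (((‖x‖ ^ (n + 1))⁻¹ : ℝ) : ℂ) * sphHarm n m (‖x‖⁻¹ • x)

/-- The unit sphere `S² ⊂ ℝ³`. -/
def S2 : Set E3 := Metric.sphere (0 : E3) 1

/-- Surface integral over the unit sphere (with respect to two-dimensional Hausdorff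
measure, which is the surface measure `dS`). -/
def sphereIntegral (g : E3 → ℂ) : ℂ := ∫ ξ in S2, g ξ ∂μH[2]

/-- The local coefficient `L_n^m = ρ^{-n} ∫_{S²} f(c + ρξ) conj(Y_n^m(ξ)) dS(ξ)`. -/
def localCoeff (c : E3) (ρ : ℝ) (f : E3 → ℂ) (n : ℕ) (m : ℤ) : ℂ :=
  (((ρ ^ n)⁻¹ : ℝ) : ℂ) *
    sphereIntegral (fun ξ => f (c + ρ • ξ) * (starRingEnd ℂ) (sphHarm n m ξ))

/-- The `p`-th order local expansion `L_c^p[f](x) = Σ_{n=0}^p Σ_{m=-n}^n L_n^m R_n^m(x-c)`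
of `f` centered at `c`, with coefficients computed on the sphere of radius `ρ` about `c`. -/
def localExp (c : E3) (ρ : ℝ) (f : E3 → ℂ) (p : ℕ) (x : E3) : ℂ :=
  ∑ n ∈ Finset.range (p + 1), ∑ m ∈ Finset.Icc (-(n : ℤ)) (n : ℤ),
    localCoeff c ρ f n m * solidR n m (x - c)

/-- The multipole coefficient `M_n^m = ρ^{n+1} ∫_{S²} g(c + ρξ) conj(Y_n^m(ξ)) dS(ξ)`. -/
def mpoleCoeff (c : E3) (ρ : ℝ) (g : E3 → ℂ) (n : ℕ) (m : ℤ) : ℂ :=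
  ((ρ ^ (n + 1) : ℝ) : ℂ) *
    sphereIntegral (fun ξ => g (c + ρ • ξ) * (starRingEnd ℂ) (sphHarm n m ξ))

/-- The `p`-th order multipole expansion
`M_c^p[g](x) = Σ_{n=0}^p Σ_{m=-n}^n M_n^m I_n^m(x-c)` of `g` centered at `c`. -/
def mpoleExp (c : E3) (ρ : ℝ) (g : E3 → ℂ) (p : ℕ) (x : E3) : ℂ :=
  ∑ n ∈ Finset.range (p + 1), ∑ m ∈ Finset.Icc (-(n : ℤ)) (n : ℤ),
    mpoleCoeff c ρ g n m * solidI n m (x - c)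

/-- `f` is harmonic on a set `s` if it is twice continuously differentiable there and its
Laplacian (sum of pure second derivatives along the coordinate directions) vanishes. -/
def IsHarmonicOn (f : E3 → ℂ) (s : Set E3) : Prop :=
  ContDiffOn ℝ 2 f s ∧ ∀ x ∈ s,
    ∑ i : Fin 3,
      iteratedFDeriv ℝ 2 f x
        ![EuclideanSpace.single i (1 : ℝ), EuclideanSpace.single i (1 : ℝ)] = 0

/-- The point potential `φ_s(x) = 1/‖x - s‖` due to a unit-strength source at `s`. -/
def pointPot (s : E3) (x : E3) : ℂ := ((‖x - s‖⁻¹ : ℝ) : ℂ)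

/-- The supremum norm of `f` over a set `A`. -/
def supNormOn (f : E3 → ℂ) (A : Set E3) : ℝ := sSup ((fun x => ‖f x‖) '' A)

/-- The degree-`p` Fourier–Laplace projection
`F_p f = Σ_{n=0}^p Σ_{m=-n}^n ⟨f, Y_n^m⟩ Y_n^m` of a function on the unit sphere. -/
def fourierProj (p : ℕ) (f : E3 → ℂ) (ξ : E3) : ℂ :=
  ∑ n ∈ Finset.range (p + 1), ∑ m ∈ Finset.Icc (-(n : ℤ)) (n : ℤ),
    sphereIntegral (fun η => f η * (starRingEnd ℂ) (sphHarm n m η)) * sphHarm n m ξ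

/-- The Lebesgue constant `Λ_p`: the operator norm of the Fourier–Laplace projection
`F_p` on `C(S²)`, i.e. the least admissible constant in `‖F_p f‖_∞ ≤ Λ ‖f‖_∞`. -/
def lebesgueConst (p : ℕ) : ℝ :=
  sInf {Λ : ℝ | 0 ≤ Λ ∧ ∀ f : E3 → ℂ, ContinuousOn f S2 →
    ∀ ξ ∈ S2, ‖fourierProj p f ξ‖ ≤ Λ * supNormOn f S2}

/-- The `ν`-th term `S^R_{n,ν}(c,t)` of the local expansion of the regular solid
harmonic `R_n^0` about `c`, from the addition theorem for regular solid harmonics. -/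
def termSR (n ν : ℕ) (c t : E3) : ℂ :=
  ((normA n 0 : ℝ) : ℂ) *
    ∑ μ ∈ (Finset.Icc (-(ν : ℤ)) (ν : ℤ) ∩
        Finset.Icc (-((n - ν : ℕ) : ℤ)) ((n - ν : ℕ) : ℤ)),
      ((n.choose ((ν : ℤ) + μ).toNat : ℝ) : ℂ) *
        (solidR (n - ν) (-μ) c * solidR ν μ (t - c)) /
          (((normA (n - ν) (-μ) : ℝ) : ℂ) * ((normA ν μ : ℝ) : ℂ))

/-- The `ν`-th term `S^I_{n,ν}(c,t)` of the local expansion of the irregular solid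
harmonic `I_n^0` about `c`, from the addition theorem for irregular solid harmonics. -/
def termSI (n ν : ℕ) (c t : E3) : ℂ :=
  ((normA n 0 : ℝ) : ℂ) *
    ∑ μ ∈ Finset.Icc (-(ν : ℤ)) (ν : ℤ),
      (-1 : ℂ) ^ ((ν : ℤ) - μ) *
        (((((n : ℤ) + ν - μ).toNat.choose n : ℝ)) : ℂ) *
        (solidI (n + ν) μ c * solidR ν (-μ) (t - c)) /
          (((normA (n + ν) μ : ℝ) : ℂ) * ((normA ν (-μ) : ℝ) : ℂ))

/-! ### Harmonic polynomials -/

open MvPolynomial in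
/-- The algebraic Laplacian `∂₀² + ∂₁² + ∂₂²` on complex polynomials in three variables. -/
def lap : MvPolynomial (Fin 3) ℂ →ₗ[ℂ] MvPolynomial (Fin 3) ℂ :=
  ∑ i : Fin 3, (pderiv i).toLinearMap ∘ₗ (pderiv i).toLinearMap

open MvPolynomial in
theorem lap_apply (P : MvPolynomial (Fin 3) ℂ) :
    lap P = pderiv 0 (pderiv 0 P) + pderiv 1 (pderiv 1 P) + pderiv 2 (pderiv 2 P) := by
  simp [lap, Fin.sum_univ_three]

open MvPolynomial in
/-- The polynomial `X₀ + σ X₁`; its powers are harmonic when `σ² = -1`. -/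
def linW (σ : ℂ) : MvPolynomial (Fin 3) ℂ := X 0 + C σ * X 1

open MvPolynomial in
/-- The squared Euclidean norm `X₀² + X₁² + X₂²`. -/
def sqN : MvPolynomial (Fin 3) ℂ := X 0 ^ 2 + X 1 ^ 2 + X 2 ^ 2

open MvPolynomial in
theorem lap_mul (P Q : MvPolynomial (Fin 3) ℂ) :
    lap (P * Q) = lap P * Q + P * lap Q +
      2 * (pderiv 0 P * pderiv 0 Q + pderiv 1 P * pderiv 1 Q + pderiv 2 P * pderiv 2 Q) := by
  simp only [lap_apply, Derivation.leibniz, smul_eq_mul, map_add]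
  ring

open MvPolynomial in
theorem pderiv_two (i : Fin 3) : pderiv i (2 : MvPolynomial (Fin 3) ℂ) = 0 :=
  (pderiv i).map_natCast 2

open MvPolynomial in
/-- Since `∇w = (1, σ, 0)` is isotropic, every power of `w = X₀ + σ X₁` is harmonic. -/
theorem lap_linW_pow (σ : ℂ) (hσ : σ ^ 2 = -1) (m : ℕ) : lap (linW σ ^ m) = 0 := by
  have h : (C σ : MvPolynomial (Fin 3) ℂ) ^ 2 = -1 := by rw [← C_pow, hσ]; simp
  have d0 : pderiv 0 (linW σ) = 1 := by simp [linW, pderiv_X]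
  have d1 : pderiv 1 (linW σ) = C σ := by simp [linW, pderiv_X]
  have d2 : pderiv 2 (linW σ) = 0 := by simp [linW, pderiv_X]
  simp only [lap_apply, pderiv_pow, Derivation.leibniz, smul_eq_mul, d0, d1, d2, pderiv_C,
    Derivation.map_natCast, mul_zero, mul_one, map_zero, add_zero, zero_add]
  linear_combination (m : MvPolynomial (Fin 3) ℂ) * (((m - 1 : ℕ) : MvPolynomial (Fin 3) ℂ) *
    linW σ ^ (m - 1 - 1)) * h

open MvPolynomial in
theorem lap_X_pow (a : ℕ) : lap (X 2 ^ a) =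
    ((a * (a - 1) : ℕ) : MvPolynomial (Fin 3) ℂ) * X 2 ^ (a - 2) := by
  have z0 : pderiv 0 (X 2 : MvPolynomial (Fin 3) ℂ) = 0 := by simp [pderiv_X]
  have z1 : pderiv 1 (X 2 : MvPolynomial (Fin 3) ℂ) = 0 := by simp [pderiv_X]
  simp only [lap_apply, pderiv_pow, Derivation.leibniz, smul_eq_mul, z0, z1, pderiv_X_self,
    Derivation.map_natCast, mul_zero, mul_one, map_zero, add_zero, zero_add,
    Nat.sub_sub, Nat.cast_mul, mul_assoc]

open MvPolynomial in
theorem pderiv_sqN (i : Fin 3) : pderiv i sqN = 2 * X i := by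
  fin_cases i <;> simp [sqN, pderiv_X]

open MvPolynomial in
theorem lap_sqN_pow (b : ℕ) : lap (sqN ^ b) =
    ((2 * b * (2 * b + 1) : ℕ) : MvPolynomial (Fin 3) ℂ) * sqN ^ (b - 1) := by
  simp only [lap_apply, pderiv_pow, Derivation.leibniz, smul_eq_mul, pderiv_sqN, pderiv_X_self,
    pderiv_two, Derivation.map_natCast, mul_zero, mul_one, add_zero]
  have hs : sqN = X 0 ^ 2 + X 1 ^ 2 + X 2 ^ 2 := rfl
  rcases b with _ | _ | b
  · simp
  · simp; ring
  · simp only [Nat.add_sub_cancel, Nat.cast_add, Nat.cast_mul, Nat.cast_ofNat, Nat.cast_one]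
    rw [pow_succ sqN b]
    linear_combination (-4 * (b + 2) * (b + 1) * sqN ^ b) * hs

open MvPolynomial in
/-- With `h = w^m X₂^a` homogeneous of degree `m + a`, Euler's identity `x · ∇h = (m + a) h` turns
the cross term of `Δ(h ‖x‖^{2b})` into a multiple of `h ‖x‖^{2b-2}`. -/
theorem lap_term (σ : ℂ) (hσ : σ ^ 2 = -1) (m a b : ℕ) :
    lap (linW σ ^ m * X 2 ^ a * sqN ^ b) =
      ((a * (a - 1) : ℕ) : MvPolynomial (Fin 3) ℂ) * (linW σ ^ m * X 2 ^ (a - 2) * sqN ^ b) +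
      ((2 * b * (2 * b + 1 + 2 * (m + a)) : ℕ) : MvPolynomial (Fin 3) ℂ) *
        (linW σ ^ m * X 2 ^ a * sqN ^ (b - 1)) := by
  have d0 : pderiv 0 (linW σ) = 1 := by simp [linW, pderiv_X]
  have d1 : pderiv 1 (linW σ) = C σ := by simp [linW, pderiv_X]
  have d2 : pderiv 2 (linW σ) = 0 := by simp [linW, pderiv_X]
  have z0 : pderiv 0 (X 2 : MvPolynomial (Fin 3) ℂ) = 0 := by simp [pderiv_X]
  have z1 : pderiv 1 (X 2 : MvPolynomial (Fin 3) ℂ) = 0 := by simp [pderiv_X]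
  have hw : linW σ = X 0 + C σ * X 1 := rfl
  rw [lap_mul, lap_mul, lap_linW_pow σ hσ, lap_X_pow, lap_sqN_pow]
  have euler : X 0 * pderiv 0 (linW σ ^ m * X 2 ^ a) + X 1 * pderiv 1 (linW σ ^ m * X 2 ^ a) +
      X 2 * pderiv 2 (linW σ ^ m * X 2 ^ a) = ((m : MvPolynomial (Fin 3) ℂ) + (a : MvPolynomial (Fin 3) ℂ)) *
        (linW σ ^ m * X 2 ^ a) := by
    simp only [pderiv_pow, Derivation.leibniz, smul_eq_mul, d0, d1, d2, z0, z1, pderiv_X_self]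
    rcases m with _ | m <;> rcases a with _ | a
    · simp
    · simp; ring
    · simp; rw [hw]; ring
    · simp only [Nat.add_sub_cancel, pow_succ (linW σ)]
      push_cast
      linear_combination (-(m + 1) * linW σ ^ m * X 2 ^ (a + 1)) * hw
  simp only [pderiv_pow, pderiv_sqN, d0, d1, d2, z0, z1, mul_zero, zero_mul, add_zero, zero_add]
  push_cast
  linear_combination (4 * b * sqN ^ (b - 1)) * euler

/-- The coefficient of `t^{2j-n-m}` in the `(n+m)`-th derivative of `(t² - 1)^n`; it vanishes when
`2j < n + m`, so the truncated exponent does no harm. -/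
def cf (n m j : ℕ) : ℤ :=
  (-1) ^ (n - j) * (n.choose j : ℤ) * ((2 * j).descFactorial (n + m) : ℤ)

open MvPolynomial in
/-- The solid harmonic of degree `n` and order `m` (order `-m` for `σ = -i`), up to a scalar:
`(X₀ + σ X₁)^m` times the homogenization by `‖x‖²` of the `(n+m)`-th derivative of
`(t² - 1)^n` in `t = X₂`. -/
def solidPoly (n m : ℕ) (σ : ℂ) : MvPolynomial (Fin 3) ℂ :=
  ∑ j ∈ Finset.range (n + 1), (cf n m j : MvPolynomial (Fin 3) ℂ) *
    (linW σ ^ m * X 2 ^ (2 * j - (n + m)) * sqN ^ (n - j))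

/-- The recursion that makes consecutive summands of `Δ (solidPoly n m σ)` cancel. -/
theorem cf_rec (n m j : ℕ) (hj : j < n) :
    cf n m (j + 1) * (((2 * (j + 1) - (n + m)) * (2 * (j + 1) - (n + m) - 1) : ℕ) : ℤ) =
      - (cf n m j * ((2 * (n - j) * (2 * j + 1) : ℕ) : ℤ)) := by
  have h1 : (2 * j + 1 - (n + m)) * ((2 * j + 2 - (n + m)) *
      (2 * j + 2).descFactorial (n + m)) =
      (2 * j + 2) * ((2 * j + 1) * (2 * j).descFactorial (n + m)) := by
    rw [Nat.succ_descFactorial (2 * j + 1), mul_left_comm, Nat.succ_descFactorial (2 * j)]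
  have h2 := Nat.choose_succ_right_eq n j
  obtain ⟨k, rfl⟩ : ∃ k, n = j + k + 1 := ⟨n - j - 1, by omega⟩
  have e1 : 2 * (j + 1) - (j + k + 1 + m) - 1 = 2 * j + 1 - (j + k + 1 + m) := by omega
  have e2 : j + k + 1 - (j + 1) = k := by omega
  have e3 : j + k + 1 - j = k + 1 := by omega
  rw [e3] at h2
  rw [cf, cf, e1, e2, e3, show 2 * (j + 1) = 2 * j + 2 by ring]
  zify at h1 h2 ⊢
  push_cast [pow_succ] 
  generalize ((2 * j + 2 - (j + k + 1 + m) : ℕ) : ℤ) = A at *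
  generalize ((2 * j + 1 - (j + k + 1 + m) : ℕ) : ℤ) = B at *
  linear_combination ((-1) ^ k * ((j + k + 1).choose (j + 1) : ℤ)) * h1 +
    ((-1) ^ k * 2 * (2 * j + 1) * ((2 * j).descFactorial (j + k + 1 + m) : ℤ)) * h2

open MvPolynomial in
/-- By `lap_term` each summand contributes two monomials, and the sum telescopes by `cf_rec`. -/
theorem lap_solidPoly (n m : ℕ) (σ : ℂ) (hσ : σ ^ 2 = -1) : lap (solidPoly n m σ) = 0 := by
  have hterm : ∀ j ∈ Finset.range (n + 1), lap ((cf n m j : MvPolynomial (Fin 3) ℂ) *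
      (linW σ ^ m * X 2 ^ (2 * j - (n + m)) * sqN ^ (n - j))) =
      ((cf n m j * (((2 * j - (n + m)) * (2 * j - (n + m) - 1) : ℕ) : ℤ) : ℤ) :
        MvPolynomial (Fin 3) ℂ) *
        (linW σ ^ m * X 2 ^ (2 * j - (n + m) - 2) * sqN ^ (n - j)) +
      ((cf n m j * ((2 * (n - j) * (2 * j + 1) : ℕ) : ℤ) : ℤ) : MvPolynomial (Fin 3) ℂ) *
        (linW σ ^ m * X 2 ^ (2 * j - (n + m)) * sqN ^ (n - j - 1)) := by
    intro j hj
    have hj' : j ≤ n := by simpa [Nat.lt_succ_iff] using hj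
    rw [← zsmul_eq_mul, map_zsmul, lap_term σ hσ, zsmul_eq_mul]
    rcases lt_or_ge (2 * j) (n + m) with h | h
    · have : cf n m j = 0 := by simp [cf, Nat.descFactorial_of_lt h]
      simp [this]
    · have : 2 * (n - j) + 1 + 2 * (m + (2 * j - (n + m))) = 2 * j + 1 := by omega
      rw [this]
      push_cast
      ring
  rw [solidPoly, map_sum, Finset.sum_congr rfl hterm, Finset.sum_add_distrib,
    Finset.sum_range_succ', Finset.sum_range_succ _ n]
  simp only [Nat.zero_sub, Nat.sub_self, mul_zero, zero_mul, Nat.cast_zero, Int.cast_zero, add_zero]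
  rw [← Finset.sum_add_distrib]
  refine Finset.sum_eq_zero fun j hj => ?_
  have hj' : j < n := by simpa using hj
  rw [cf_rec n m j hj', show 2 * (j + 1) - (n + m) - 2 = 2 * j - (n + m) by omega,
    show n - (j + 1) = n - j - 1 by omega]
  push_cast
  ring

/-! ### The maximum principle for harmonic polynomials -/

open MvPolynomial in
/-- Evaluation of a complex polynomial at a point of `ℝ³`. -/
def ev (P : MvPolynomial (Fin 3) ℂ) (x : E3) : ℂ := eval (fun i => (x i : ℂ)) P

open MvPolynomial in
theorem continuous_ev (P : MvPolynomial (Fin 3) ℂ) : Continuous (ev P) := by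
  unfold ev
  induction P using MvPolynomial.induction_on with
  | C a => simpa using continuous_const
  | add p q hp hq => simp only [map_add]; exact hp.add hq
  | mul_X p i hp =>
    simp only [map_mul, eval_X]
    exact hp.mul (by fun_prop)

open MvPolynomial in
theorem hasDerivAt_ev (P : MvPolynomial (Fin 3) ℂ) (x : E3) (i : Fin 3) (t : ℝ) :
    HasDerivAt (fun s : ℝ => ev P (x + s • EuclideanSpace.single i (1 : ℝ)))
      (ev (pderiv i P) (x + t • EuclideanSpace.single i (1 : ℝ))) t := by
  unfold ev
  induction P using MvPolynomial.induction_on with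
  | C a => simpa using hasDerivAt_const t a
  | add p q hp hq => simp only [map_add]; exact hp.add hq
  | mul_X p j hp =>
    have hX : HasDerivAt (fun s : ℝ => (((x + s • EuclideanSpace.single i (1 : ℝ)) j : ℝ) : ℂ))
        (((Pi.single i (1 : ℝ) : Fin 3 → ℝ) j : ℝ) : ℂ) t := by
      apply HasDerivAt.ofReal_comp
      have := ((hasDerivAt_id t).mul_const ((Pi.single i (1 : ℝ) : Fin 3 → ℝ) j)).const_add (x j)
      simp only [id_eq, one_mul] at this
      exact this
    have h := hp.mul hX
    simp only [map_mul, eval_X, Derivation.leibniz, smul_eq_mul, map_add]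
    refine HasDerivAt.congr_deriv h ?_
    rw [pderiv_X]
    by_cases hij : i = j
    · subst hij; simp; ring
    · simp [Ne.symm hij, mul_comm]

/-- At a local maximum the second derivative is nonpositive. -/
theorem second_deriv_nonpos {g g' g'' : ℝ → ℝ} (h1 : ∀ t, HasDerivAt g (g' t) t)
    (h2 : ∀ t, HasDerivAt g' (g'' t) t) (hmax : IsLocalMax g 0) : g'' 0 ≤ 0 := by
  by_contra! hpos
  have e1 : deriv g = g' := funext fun t => (h1 t).deriv
  have e2 : deriv g' = g'' := funext fun t => (h2 t).deriv
  have hmin : IsLocalMin g 0 := isLocalMin_of_deriv_deriv_pos (by rwa [e1, e2])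
    hmax.deriv_eq_zero (h1 0).continuousAt
  -- A point that is both a local maximum and a local minimum has `g` constant around it.
  have hc : g =ᶠ[nhds 0] fun _ => g 0 := by
    filter_upwards [hmax, hmin] with t a b using le_antisymm a b
  have hd := hc.deriv.deriv_eq
  rw [e1, e2] at hd
  simp at hd
  linarith

open MvPolynomial in
/-- Maximum modulus principle: if the bound failed at `x`, then `Re (α P) + ε ‖·‖²`, for a suitable
unimodular `α` and small `ε > 0`, would be strictly subharmonic with an interior maximum. -/
theorem ev_max_principle (P : MvPolynomial (Fin 3) ℂ) (hP : lap P = 0) {ρ : ℝ} (hρ : 0 < ρ)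
    {M : ℝ} (hM : ∀ y : E3, ‖y‖ = ρ → ‖ev P y‖ ≤ M) (x : E3) (hx : ‖x‖ ≤ ρ) :
    ‖ev P x‖ ≤ M := by
  by_contra! hlt
  have hM0 : 0 ≤ M := by
    refine (norm_nonneg _).trans (hM (EuclideanSpace.single 0 ρ) ?_)
    simp [abs_of_pos hρ]
  have hpos : 0 < ‖ev P x‖ := hM0.trans_lt hlt
  -- `α P(x) = ‖P(x)‖`, so that the real part of `α P` detects the modulus at `x`.
  obtain ⟨α, hα, hαx⟩ : ∃ α : ℂ, ‖α‖ = 1 ∧ α * ev P x = (‖ev P x‖ : ℂ) := by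
    refine ⟨(starRingEnd ℂ) (ev P x) / (‖ev P x‖ : ℂ), ?_, ?_⟩
    · simp [hpos.ne']
    · have : ((‖ev P x‖ : ℝ) : ℂ) ≠ 0 := by exact_mod_cast hpos.ne'
      field_simp
      rw [mul_comm, Complex.mul_conj']
  set ε : ℝ := (‖ev P x‖ - M) / (2 * ρ ^ 2) with hε
  have hε0 : 0 < ε := by have := sub_pos.2 hlt; positivity
  set Q : MvPolynomial (Fin 3) ℂ := C α * P + C (ε : ℂ) * sqN with hQ
  have hlapQ : lap Q = C ((6 * ε : ℝ) : ℂ) := by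
    have h1 := lap_sqN_pow 1
    simp only [pow_one, Nat.sub_self, pow_zero] at h1
    rw [hQ, map_add, C_mul', C_mul', map_smul, map_smul, hP, h1, smul_zero, zero_add, ← C_mul']
    push_cast
    simp
    rw [mul_comm]
    rw [show (6 : MvPolynomial (Fin 3) ℂ) = C 6 from (map_ofNat C 6).symm]
  have hevQ : ∀ y, (ev Q y).re = (α * ev P y).re + ε * ‖y‖ ^ 2 := by
    intro y
    have : ev Q y = α * ev P y + ((ε * ‖y‖ ^ 2 : ℝ) : ℂ) := by
      rw [EuclideanSpace.real_norm_sq_eq, Fin.sum_univ_three]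
      simp [ev, hQ, sqN]
    rw [this, Complex.add_re, Complex.ofReal_re]
  have hcont : Continuous fun y => (ev Q y).re := Complex.continuous_re.comp (continuous_ev Q)
  obtain ⟨y, hy, hymax⟩ := (isCompact_closedBall (0 : E3) ρ).exists_isMaxOn
    ⟨0, by simp [hρ.le]⟩ hcont.continuousOn
  have hy' : ‖y‖ ≤ ρ := by simpa using hy
  have hxy : ‖ev P x‖ ≤ (ev Q y).re := by
    have h := hymax (show x ∈ closedBall (0 : E3) ρ by simpa using hx)
    simp only [Set.mem_ofPred_eq] at h
    rw [hevQ x, hαx, Complex.ofReal_re] at h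
    have : 0 ≤ ε * ‖x‖ ^ 2 := by positivity
    linarith
  have hyint : ‖y‖ < ρ := by
    refine lt_of_le_of_ne hy' fun heq => ?_
    have h1 : (α * ev P y).re ≤ M := by
      refine (Complex.re_le_norm _).trans ?_
      rw [norm_mul, hα, one_mul]
      exact hM y heq
    have h2 : ε * ρ ^ 2 = (‖ev P x‖ - M) / 2 := by rw [hε]; field_simp
    rw [hevQ y, heq, h2] at hxy
    linarith
  have hsecond : ∀ i : Fin 3, (ev (pderiv i (pderiv i Q)) y).re ≤ 0 := by
    intro i
    have hre : ∀ R : MvPolynomial (Fin 3) ℂ, ∀ t : ℝ,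
        HasDerivAt (fun s : ℝ => (ev R (y + s • EuclideanSpace.single i (1 : ℝ))).re)
          (ev (pderiv i R) (y + t • EuclideanSpace.single i (1 : ℝ))).re t := fun R t =>
      Complex.reCLM.hasFDerivAt.comp_hasDerivAt t (hasDerivAt_ev R y i t)
    have hloc : IsLocalMax (fun z : E3 => (ev Q z).re) y :=
      hymax.isLocalMax (closedBall_mem_nhds_of_mem (by simpa using hyint))
    have hline : IsLocalMax
        (fun s : ℝ => (ev Q (y + s • EuclideanSpace.single i (1 : ℝ))).re) 0 := by
      have hc : Tendsto (fun s : ℝ => y + s • EuclideanSpace.single i (1 : ℝ)) (nhds 0)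
          (nhds y) := by
        have : Continuous (fun s : ℝ => y + s • EuclideanSpace.single i (1 : ℝ)) := by fun_prop
        simpa using this.tendsto 0
      have := hc.eventually hloc
      simpa [IsLocalMax, IsMaxFilter] using this
    simpa using second_deriv_nonpos (hre Q) (hre (pderiv i Q)) hline
  have hsum : (ev (lap Q) y).re = 6 * ε := by
    rw [hlapQ, ev, eval_C, Complex.ofReal_re]
  rw [lap_apply] at hsum
  simp only [ev, map_add, Complex.add_re] at hsum hsecond
  linarith [hsecond 0, hsecond 1, hsecond 2]

/-! ### Finiteness of the measure of the sphere -/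

/-- Spherical coordinates map the compact square `[-π, π]²` onto `S²` by a Lipschitz map. -/
theorem hausdorff_S2_lt_top : (μH[2] : Measure E3) S2 < ⊤ := by
  set g : (Fin 2 → ℝ) → E3 := fun t =>
    !₂[Real.sin (t 0) * Real.cos (t 1), Real.sin (t 0) * Real.sin (t 1), Real.cos (t 0)] with hg
  set K : Set (Fin 2 → ℝ) := Set.Icc (fun _ => -π) (fun _ => π) with hK
  have hgc : ContDiff ℝ 1 g := by
    rw [contDiff_euclidean]
    intro i
    fin_cases i <;> simp [hg] <;> fun_prop
  obtain ⟨L, hL⟩ := hgc.contDiffOn.exists_lipschitzOnWith one_ne_zero (convex_Icc _ _)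
    (isCompact_Icc : IsCompact K)
  have hsub : S2 ⊆ g '' K := by
    intro ξ hξ
    have hn : ‖ξ‖ = 1 := by simpa [S2] using hξ
    have hsq : ξ 0 ^ 2 + ξ 1 ^ 2 + ξ 2 ^ 2 = 1 := by
      have := EuclideanSpace.real_norm_sq_eq ξ
      rw [Fin.sum_univ_three, hn] at this
      linarith
    set w : ℂ := ⟨ξ 0, ξ 1⟩ with hw
    have hs : Real.sin (Real.arccos (ξ 2)) = ‖w‖ := by
      rw [Real.sin_arccos, Complex.norm_def]
      congr 1
      simp [Complex.normSq_apply, hw]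
      linarith
    have h0 : ‖w‖ * Real.cos w.arg = ξ 0 := Complex.norm_mul_cos_arg w
    have h1 : ‖w‖ * Real.sin w.arg = ξ 1 := Complex.norm_mul_sin_arg w
    have h2 : Real.cos (Real.arccos (ξ 2)) = ξ 2 :=
      Real.cos_arccos (by nlinarith [sq_nonneg (ξ 0), sq_nonneg (ξ 1)])
        (by nlinarith [sq_nonneg (ξ 0), sq_nonneg (ξ 1)])
    refine ⟨![Real.arccos (ξ 2), w.arg], ⟨fun i => ?_, fun i => ?_⟩, ?_⟩
    · fin_cases i
      · simpa using (neg_nonpos.2 Real.pi_pos.le).trans (Real.arccos_nonneg _)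
      · simpa using (Complex.neg_pi_lt_arg w).le
    · fin_cases i
      · simpa using Real.arccos_le_pi _
      · simpa using Complex.arg_le_pi w
    · ext i
      fin_cases i
      · simpa [hg, hs] using h0
      · simpa [hg, hs] using h1
      · simpa [hg] using h2
  have hvol : (μH[2] : Measure (Fin 2 → ℝ)) K < ⊤ := by
    have : (μH[2] : Measure (Fin 2 → ℝ)) = volume := by
      simpa using hausdorffMeasure_pi_real (ι := Fin 2)
    rw [this]
    exact isCompact_Icc.measure_lt_top
  refine (measure_mono hsub).trans_lt ((hL.hausdorffMeasure_image_le zero_le_two).trans_lt ?_)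
  exact ENNReal.mul_lt_top (by simp) hvol

/-! ### Solid harmonics are harmonic polynomials -/

theorem iteratedDeriv_polynomial (q : Polynomial ℝ) (k : ℕ) :
    iteratedDeriv k (fun x => q.eval x) = fun x => (Polynomial.derivative^[k] q).eval x := by
  induction k with
  | zero => simp
  | succ k ih =>
    rw [iteratedDeriv_succ, ih, Function.iterate_succ_apply']
    funext x
    exact Polynomial.deriv _

theorem iterate_derivative_expand (n m : ℕ) (x : ℝ) :
    (Polynomial.derivative^[n + m] ((Polynomial.X ^ 2 - 1 : Polynomial ℝ) ^ n)).eval x =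
      ∑ j ∈ Finset.range (n + 1), (cf n m j : ℝ) * x ^ (2 * j - (n + m)) := by
  rw [sub_eq_add_neg, add_pow, Polynomial.iterate_derivative_sum, Polynomial.eval_finsetSum]
  refine Finset.sum_congr rfl fun j _ => ?_
  have : ((Polynomial.X ^ 2) ^ j * (-1) ^ (n - j) * (n.choose j : Polynomial ℝ)) =
      Polynomial.C ((-1) ^ (n - j) * (n.choose j : ℝ)) * Polynomial.X ^ (2 * j) := by
    simp
    ring
  rw [this, Polynomial.iterate_derivative_C_mul,
    Polynomial.iterate_derivative_X_pow_eq_natCast_mul]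
  simp [cf]
  ring

theorem iteratedDeriv_legendreP (n m : ℕ) (x : ℝ) :
    iteratedDeriv m (legendreP n) x = (1 / ((2 : ℝ) ^ n * n.factorial)) *
      ∑ j ∈ Finset.range (n + 1), (cf n m j : ℝ) * x ^ (2 * j - (n + m)) := by
  have h : legendreP n = fun x => (Polynomial.C (1 / ((2 : ℝ) ^ n * n.factorial)) *
      Polynomial.derivative^[n] ((Polynomial.X ^ 2 - 1 : Polynomial ℝ) ^ n)).eval x := by
    funext y
    have e : (fun t : ℝ => (t ^ 2 - 1) ^ n) =
        fun t => ((Polynomial.X ^ 2 - 1 : Polynomial ℝ) ^ n).eval t := by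
      funext t; simp
    rw [legendreP, e, iteratedDeriv_polynomial, Polynomial.eval_mul, Polynomial.eval_C]
  rw [h, iteratedDeriv_polynomial, Polynomial.iterate_derivative_C_mul,
    ← Function.iterate_add_apply]
  beta_reduce
  rw [Polynomial.eval_mul, Polynomial.eval_C, add_comm m n, iterate_derivative_expand]

theorem ev_sqN (x : E3) : ev sqN x = ((‖x‖ ^ 2 : ℝ) : ℂ) := by
  rw [EuclideanSpace.real_norm_sq_eq, Fin.sum_univ_three]
  simp [ev, sqN]

theorem ev_solidPoly (n m : ℕ) (σ : ℂ) (x : E3) :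
    ev (solidPoly n m σ) x = ∑ j ∈ Finset.range (n + 1), (cf n m j : ℂ) *
      (((x 0 : ℂ) + σ * x 1) ^ m * (x 2 : ℂ) ^ (2 * j - (n + m)) *
        ((‖x‖ ^ 2 : ℝ) : ℂ) ^ (n - j)) := by
  simp_rw [← ev_sqN]
  simp [ev, solidPoly, linW]

theorem ev_solidPoly_smul (n m : ℕ) (σ : ℂ) (r : ℝ) (x : E3) :
    ev (solidPoly n m σ) (r • x) = (r : ℂ) ^ n * ev (solidPoly n m σ) x := by
  rw [ev_solidPoly, ev_solidPoly, Finset.mul_sum]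
  refine Finset.sum_congr rfl fun j hj => ?_
  have hj' : j ≤ n := by simpa [Nat.lt_succ_iff] using hj
  rcases lt_or_ge (2 * j) (n + m) with h | h
  · have : cf n m j = 0 := by simp [cf, Nat.descFactorial_of_lt h]
    simp [this]
  · have e : (r : ℂ) ^ n = (r : ℂ) ^ m * (r : ℂ) ^ (2 * j - (n + m)) * ((r : ℂ) ^ 2) ^ (n - j) := by
      rw [← pow_mul, ← pow_add, ← pow_add]
      congr 1
      omega
    have e1 : (((r • x) 0 : ℝ) : ℂ) + σ * ((r • x) 1 : ℝ) = r * ((x 0 : ℂ) + σ * x 1) := by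
      simp; ring
    rw [e, e1, norm_smul, mul_pow, mul_pow ‖r‖, Real.norm_eq_abs, sq_abs]
    simp only [PiLp.smul_apply, smul_eq_mul, Complex.ofReal_mul, Complex.ofReal_pow, mul_pow]
    ring

/-- For `u = e^{± i φ}` and `σ = ± i`, the identity `(1 - ξ₂²)^{m/2} u^m = (ξ₀ + σ ξ₁)^m` on the unit
sphere turns `P_n^m(cos θ) e^{± i m φ}` into a polynomial. -/
theorem assocLegendreNat_mul_exp (n m : ℕ) (ξ : E3) (hξ : ‖ξ‖ = 1) (σ u : ℂ)
    (hσ : ((Real.sqrt (1 - ξ 2 ^ 2) : ℝ) : ℂ) * u = (ξ 0 : ℂ) + σ * ξ 1) :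
    u ^ m * ((assocLegendreNat n m (ξ 2) : ℝ) : ℂ) =
      (((-1) ^ m * (1 / ((2 : ℝ) ^ n * n.factorial)) : ℝ) : ℂ) * ev (solidPoly n m σ) ξ := by
  have hsq : ξ 0 ^ 2 + ξ 1 ^ 2 + ξ 2 ^ 2 = 1 := by
    have := EuclideanSpace.real_norm_sq_eq ξ
    rw [Fin.sum_univ_three, hξ] at this
    linarith
  have h0 : 0 ≤ 1 - ξ 2 ^ 2 := by nlinarith [sq_nonneg (ξ 0), sq_nonneg (ξ 1)]
  have hr : (1 - ξ 2 ^ 2) ^ ((m : ℝ) / 2) = Real.sqrt (1 - ξ 2 ^ 2) ^ m := by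
    rw [Real.sqrt_eq_rpow, ← Real.rpow_mul_natCast h0]
    congr 1
    ring
  rw [assocLegendreNat, hr, iteratedDeriv_legendreP, ev_solidPoly, ← hσ, hξ]
  push_cast
  simp only [one_pow, mul_one, mul_pow, Finset.mul_sum]
  refine Finset.sum_congr rfl fun j _ => ?_
  ring

/-- On the sphere `Y_n^m` is a multiple of `solidPoly n |m| σ`, with `σ = i` for `m ≥ 0` and
`σ = -i` for `m < 0`. -/
theorem sphHarm_eq_ev (n : ℕ) (m : ℤ) : ∃ (k σ : ℂ), σ ^ 2 = -1 ∧
    ∀ ξ : E3, ‖ξ‖ = 1 → sphHarm n m ξ = k * ev (solidPoly n m.natAbs σ) ξ := by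
  -- `√(1 - ξ₂²) = |ξ₀ + i ξ₁|`.
  have hs : ∀ ξ : E3, ‖ξ‖ = 1 →
      Real.sqrt (1 - ξ 2 ^ 2) = ‖((ξ 0 : ℂ) + (ξ 1 : ℂ) * Complex.I)‖ := by
    intro ξ hξ
    have := EuclideanSpace.real_norm_sq_eq ξ
    rw [Fin.sum_univ_three, hξ] at this
    rw [Complex.norm_def]
    congr 1
    simp [Complex.normSq_apply]
    linarith
  rcases le_or_gt 0 m with hm | hm
  · obtain ⟨l, rfl⟩ := Int.eq_ofNat_of_zero_le hm
    refine ⟨(normA n l : ℂ) * (((-1) ^ l * (1 / ((2 : ℝ) ^ n * n.factorial)) : ℝ) : ℂ),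
      Complex.I, Complex.I_sq, fun ξ hξ => ?_⟩
    have h := assocLegendreNat_mul_exp n l ξ hξ Complex.I
      (Complex.exp ((Complex.arg ((ξ 0 : ℂ) + (ξ 1 : ℂ) * Complex.I) : ℝ) * Complex.I))
      (by rw [hs ξ hξ, Complex.norm_mul_exp_arg_mul_I]; ring)
    rw [← Complex.exp_nat_mul] at h
    simp only [Int.natAbs_natCast]
    rw [mul_assoc, ← h, sphHarm, assocLegendre, if_pos hm]
    simp only [Int.toNat_natCast, Int.cast_natCast]
    rw [← mul_assoc ((l : ℂ)), mul_assoc]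
  · obtain ⟨l, rfl⟩ : ∃ l : ℕ, m = -l := ⟨m.natAbs, by omega⟩
    have hm' : ¬ (0 ≤ -(l : ℤ)) := by omega
    refine ⟨(normA n (-l) : ℂ) * (((-1 : ℝ) ^ l *
      (((n - l).factorial : ℝ) / ((n + l).factorial : ℝ)) : ℝ) : ℂ) *
        (((-1) ^ l * (1 / ((2 : ℝ) ^ n * n.factorial)) : ℝ) : ℂ),
      -Complex.I, by simp, fun ξ hξ => ?_⟩
    have hc : ((‖((ξ 0 : ℂ) + (ξ 1 : ℂ) * Complex.I)‖ : ℝ) : ℂ) *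
        Complex.exp (-((Complex.arg ((ξ 0 : ℂ) + (ξ 1 : ℂ) * Complex.I) : ℝ) * Complex.I)) =
        (ξ 0 : ℂ) + -Complex.I * ξ 1 := by
      have := congrArg (starRingEnd ℂ)
        (Complex.norm_mul_exp_arg_mul_I ((ξ 0 : ℂ) + (ξ 1 : ℂ) * Complex.I))
      rw [map_mul, ← Complex.exp_conj, map_mul] at this
      simp only [Complex.conj_ofReal, Complex.conj_I, map_add, map_mul, mul_neg] at this
      rw [this]
      ring
    have h := assocLegendreNat_mul_exp n l ξ hξ (-Complex.I) _ (by rw [hs ξ hξ]; exact hc)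
    rw [← Complex.exp_nat_mul] at h
    simp only [Int.natAbs_neg, Int.natAbs_natCast]
    rw [mul_assoc, ← h, sphHarm, assocLegendre, if_neg hm']
    simp only [neg_neg, Int.toNat_natCast, Int.cast_natCast, Int.cast_neg, Complex.ofReal_mul]
    rw [neg_mul, neg_mul, mul_neg, mul_assoc (l : ℂ)]
    ring

/-- Every regular solid harmonic coincides with a harmonic polynomial. -/
theorem solidR_eq_ev (n : ℕ) (m : ℤ) (hm : m ∈ Finset.Icc (-(n : ℤ)) (n : ℤ)) :
    ∃ P : MvPolynomial (Fin 3) ℂ, lap P = 0 ∧ ∀ x : E3, solidR n m x = ev P x := by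
  obtain ⟨k, σ, hσ, h⟩ := sphHarm_eq_ev n m
  refine ⟨k • solidPoly n m.natAbs σ, by rw [map_smul, lap_solidPoly _ _ _ hσ, smul_zero],
    fun x => ?_⟩
  have hev : ∀ y : E3, ev (k • solidPoly n m.natAbs σ) y = k * ev (solidPoly n m.natAbs σ) y :=
    fun y => by simp [ev, MvPolynomial.smul_eval]
  rw [hev, solidR]
  have hsm := ev_solidPoly_smul n m.natAbs σ
  by_cases hx : x = 0
  · subst hx
    set e : E3 := EuclideanSpace.single 0 1 with he
    have hen : ‖e‖ = 1 := by simp [he]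
    have h0 := hsm 0 e
    rw [zero_smul] at h0
    rw [h0]
    rcases Nat.eq_zero_or_pos n with rfl | hn
    · obtain rfl : m = 0 := by simpa using hm
      -- `Y_0^0` is constant, which covers its value at the origin.
      have hconst : sphHarm 0 0 (‖(0 : E3)‖⁻¹ • (0 : E3)) = sphHarm 0 0 e := by
        simp [sphHarm, assocLegendre, assocLegendreNat, legendreP]
      rw [hconst, h e hen]
      simp
    · simp [hn.ne']
  · have hx' : ‖x‖ ≠ 0 := norm_ne_zero_iff.2 hx
    have h1 := hsm ‖x‖ (‖x‖⁻¹ • x)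
    rw [smul_inv_smul₀ hx'] at h1
    rw [h _ (by rw [norm_smul, norm_inv, norm_norm, inv_mul_cancel₀ hx']), h1]
    push_cast
    ring

/-! ### The Lebesgue constant and the local expansion -/

theorem solidR_of_norm_one (n : ℕ) (m : ℤ) {ξ : E3} (hξ : ‖ξ‖ = 1) :
    solidR n m ξ = sphHarm n m ξ := by
  simp [solidR, hξ]

theorem norm_le_supNormOn {f : E3 → ℂ} {A : Set E3} (hA : IsCompact A) (hf : ContinuousOn f A)
    {x : E3} (hx : x ∈ A) : ‖f x‖ ≤ supNormOn f A :=
  le_csSup (hA.bddAbove_image hf.norm) ⟨x, hx, rfl⟩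

theorem supNormOn_nonneg (f : E3 → ℂ) (A : Set E3) : 0 ≤ supNormOn f A :=
  Real.sSup_nonneg (by rintro _ ⟨x, _, rfl⟩; exact norm_nonneg _)

theorem isCompact_S2 : IsCompact S2 := isCompact_sphere _ _

theorem sphHarm_bounded (n : ℕ) (m : ℤ) (hm : m ∈ Finset.Icc (-(n : ℤ)) (n : ℤ)) :
    ∃ B : ℝ, 0 ≤ B ∧ ∀ ξ ∈ S2, ‖sphHarm n m ξ‖ ≤ B := by
  obtain ⟨P, -, hP⟩ := solidR_eq_ev n m hm
  refine ⟨supNormOn (ev P) S2, supNormOn_nonneg _ _, fun ξ hξ => ?_⟩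
  rw [← solidR_of_norm_one n m (by simpa [S2] using hξ), hP]
  exact norm_le_supNormOn isCompact_S2 (continuous_ev P).continuousOn hξ

/-- The Fourier–Laplace projection is bounded, so `lebesgueConst p` is the infimum of a nonempty
set. -/
theorem fourierProj_bounded (p : ℕ) : ∃ Λ : ℝ, 0 ≤ Λ ∧ ∀ f : E3 → ℂ, ContinuousOn f S2 →
    ∀ ξ ∈ S2, ‖fourierProj p f ξ‖ ≤ Λ * supNormOn f S2 := by
  choose! B hB0 hB using sphHarm_bounded
  refine ⟨∑ n ∈ Finset.range (p + 1), ∑ m ∈ Finset.Icc (-(n : ℤ)) (n : ℤ),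
    B n m * (μH[2] : Measure E3).real S2 * B n m, ?_, fun f hf ξ hξ => ?_⟩
  · exact Finset.sum_nonneg fun n _ => Finset.sum_nonneg fun m hm =>
      mul_nonneg (mul_nonneg (hB0 n m hm) measureReal_nonneg) (hB0 n m hm)
  · rw [fourierProj, Finset.sum_mul]
    refine norm_sum_le_of_le _ fun n _ => ?_
    rw [Finset.sum_mul]
    refine norm_sum_le_of_le _ fun m hm => ?_
    have hint : ‖sphereIntegral (fun η => f η * (starRingEnd ℂ) (sphHarm n m η))‖ ≤
        supNormOn f S2 * B n m * (μH[2] : Measure E3).real S2 := by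
      refine norm_setIntegral_le_of_norm_le_const hausdorff_S2_lt_top fun η hη => ?_
      rw [norm_mul, RCLike.norm_conj]
      exact mul_le_mul (norm_le_supNormOn isCompact_S2 hf hη) (hB n m hm η hη) (norm_nonneg _)
        (supNormOn_nonneg _ _)
    rw [norm_mul]
    calc _ ≤ (supNormOn f S2 * B n m * (μH[2] : Measure E3).real S2) * B n m :=
          mul_le_mul hint (hB n m hm ξ hξ) (norm_nonneg _) ((norm_nonneg _).trans hint)
      _ = _ := by ring

theorem fourierProj_le (p : ℕ) (f : E3 → ℂ) (hf : ContinuousOn f S2) (ξ : E3) (hξ : ξ ∈ S2) :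
    ‖fourierProj p f ξ‖ ≤ lebesgueConst p * supNormOn f S2 := by
  obtain ⟨Λ, hΛ⟩ := fourierProj_bounded p
  rcases (supNormOn_nonneg f S2).eq_or_lt with h0 | hpos
  · simpa [← h0] using hΛ.2 f hf ξ hξ
  · rw [← div_le_iff₀ hpos]
    exact le_csInf ⟨Λ, hΛ⟩ fun b hb => (div_le_iff₀ hpos).2 (hb.2 f hf ξ hξ)

theorem lebesgueConst_nonneg (p : ℕ) : 0 ≤ lebesgueConst p :=
  Real.sInf_nonneg fun _ h => h.1

/-- On the sphere of radius `ρ` the factor `ρ^n` of `R_n^m` cancels that of the coefficient. -/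
theorem localExp_sphere (c : E3) {ρ : ℝ} (hρ : 0 < ρ) (f : E3 → ℂ) (p : ℕ) (y : E3)
    (hy : ‖y‖ = ρ) : localExp c ρ f p (c + y) =
      fourierProj p (fun ξ => f (c + ρ • ξ)) (ρ⁻¹ • y) := by
  have hρ' : (ρ : ℂ) ≠ 0 := by exact_mod_cast hρ.ne'
  refine Finset.sum_congr rfl fun n _ => Finset.sum_congr rfl fun m _ => ?_
  rw [localCoeff, solidR, add_sub_cancel_left, hy]
  push_cast
  field_simp

theorem localExp_eq_ev (c : E3) (ρ : ℝ) (f : E3 → ℂ) (p : ℕ) :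
    ∃ P : MvPolynomial (Fin 3) ℂ, lap P = 0 ∧ ∀ y : E3, localExp c ρ f p (c + y) = ev P y := by
  choose! P hP hPe using solidR_eq_ev
  refine ⟨∑ n ∈ Finset.range (p + 1), ∑ m ∈ Finset.Icc (-(n : ℤ)) (n : ℤ),
    localCoeff c ρ f n m • P n m, ?_, fun y => ?_⟩
  · simp only [map_sum, map_smul]
    exact Finset.sum_eq_zero fun n _ => Finset.sum_eq_zero fun m hm => by rw [hP n m hm, smul_zero]
  · simp only [localExp, ev, map_sum, MvPolynomial.smul_eval, add_sub_cancel_left]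
    exact Finset.sum_congr rfl fun n _ => Finset.sum_congr rfl fun m hm => by
      rw [hPe n m hm, ev]

/-- For `f` harmonic in `B(c,ρ)` and continuous on `B̄(c,ρ)`, the
`p`-th order local expansion satisfies `‖L_c^p[f]‖_∞ ≤ Λ_p ‖f‖_∞` on `B̄(c,ρ)`. -/
theorem statement1 (ρ : ℝ) (hρ : 0 < ρ) (c : E3) (f : E3 → ℂ)
    (hf : IsHarmonicOn f (Metric.ball c ρ))
    (hfc : ContinuousOn f (Metric.closedBall c ρ)) (p : ℕ) :
    ∀ x ∈ Metric.closedBall c ρ,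
      ‖localExp c ρ f p x‖ ≤ lebesgueConst p * supNormOn f (Metric.closedBall c ρ) := by
  intro x hx
  obtain ⟨P, hP, hPe⟩ := localExp_eq_ev c ρ f p
  have hmaps : ∀ ξ ∈ S2, c + ρ • ξ ∈ closedBall c ρ := by
    intro ξ hξ
    have hξ' : ‖ξ‖ = 1 := by simpa [S2] using hξ
    simp [norm_smul, hξ', abs_of_pos hρ]
  have hg : ContinuousOn (fun ξ => f (c + ρ • ξ)) S2 :=
    hfc.comp (by fun_prop : Continuous fun ξ : E3 => c + ρ • ξ).continuousOn hmaps
  have hsup : supNormOn (fun ξ => f (c + ρ • ξ)) S2 ≤ supNormOn f (closedBall c ρ) := by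
    refine Real.sSup_le ?_ (supNormOn_nonneg _ _)
    rintro _ ⟨ξ, hξ, rfl⟩
    exact norm_le_supNormOn (isCompact_closedBall c ρ) hfc (hmaps ξ hξ)
  have hbd : ∀ y : E3, ‖y‖ = ρ →
      ‖ev P y‖ ≤ lebesgueConst p * supNormOn f (closedBall c ρ) := by
    intro y hy
    rw [← hPe, localExp_sphere c hρ f p y hy]
    refine (fourierProj_le p _ hg _ ?_).trans
      (mul_le_mul_of_nonneg_left hsup (lebesgueConst_nonneg p))
    simp [S2, norm_smul, hy, abs_of_pos hρ, hρ.ne']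
  have h := ev_max_principle P hP hρ hbd (x - c) (by simpa [dist_eq_norm] using hx)
  rwa [← hPe, add_sub_cancel] at h

end Paper
end
end

section
/- Let n, m, k be nonnegative integers with n ≥ k. Then the binomial coefficients satisfy C(n+k, m) · C(n−k, m) ≤ C(n, m)². -/
/-! Multiplying by `(m!)²` turns the claim into the same inequality for falling factorials,
`(n+k)ₘ (n-k)ₘ ≤ (n)ₘ²`. This holds factor by factor, since
`(n+k-j)(n-k-j) = (n-j)² - k²` for `j ≤ n-k`, while for larger `j` the truncated factor
`n-k-j` vanishes. -/

theorem factor_mul_factor_le (n k j : ℕ) :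
    (n + k - j) * (n - k - j) ≤ (n - j) ^ 2 := by
  rcases le_total (n - k) j with hj | hj
  · simp [Nat.sub_eq_zero_of_le hj]
  · rcases le_total n k with hk | hk
    · simp [Nat.sub_eq_zero_of_le hk]
    · obtain ⟨a, rfl⟩ : ∃ a, n = a + k + j := ⟨n - k - j, by omega⟩
      have h1 : a + k + j + k - j = a + 2 * k := by omega
      have h2 : a + k + j - k - j = a := by omega
      have h3 : a + k + j - j = a + k := by omega
      rw [h1, h2, h3]
      nlinarith [Nat.zero_le (k * k)]

theorem descFactorial_mul_le (n m k : ℕ) :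
    (n + k).descFactorial m * (n - k).descFactorial m ≤ n.descFactorial m ^ 2 := by
  induction m with
  | zero => simp
  | succ j ih =>
    simp only [Nat.descFactorial_succ]
    rw [mul_mul_mul_comm, mul_pow]
    exact Nat.mul_le_mul (factor_mul_factor_le n k j) ih

/-- For naturals `n ≥ k`, `C(n+k, m) · C(n−k, m) ≤ C(n, m)²`. -/
theorem statement3 (n m k : ℕ) (h : k ≤ n) :
    (n + k).choose m * (n - k).choose m ≤ n.choose m ^ 2 := by
  have key := descFactorial_mul_le n m k
  simp only [Nat.descFactorial_eq_factorial_mul_choose] at key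
  rw [mul_mul_mul_comm, mul_pow, ← sq] at key
  exact Nat.le_of_mul_le_mul_left key (pow_pos m.factorial_pos 2)
end

section
/- Let n ≥ 0 be an integer, 0 ≤ ν ≤ n, and c, t ∈ ℝ³. Define the ν-th term of the local expansion of the regular solid harmonic R_n^0 about c as S^R_{n,ν}(c,t) = A_n^0 Σ_{μ ∈ I(0,ν) ∩ I(0,n−ν)} C(n, ν+μ) · R_{n−ν}^{−μ}(c) R_ν^μ(t−c) / (A_{n−ν}^{−μ} A_ν^μ), where A_n^m = √((2n+1)/(4π) · (n−m)!/(n+m)!). Then |S^R_{n,ν}(c,t)| ≤ √((2n+1)/(4π)) · C(n,ν) · ‖c‖^{n−ν} · ‖t−c‖^ν. -/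
/-! The bound comes from Laplace's integral representation of solid harmonics, in polynomial form.
To `v ∈ ℝ³` with `ζ = v₁ + i v₂` attach the quadratic polynomial
`Q_v(w) = (i/2) ζ w² + v₃ w + (i/2) ζ̄`. For `|w| = 1` one has `Q_v(w) = w (v₃ + i Re(ζ w))`, so
`|Q_v(w)| ≤ ‖v‖` (`norm_vecQ_eval_le`).

Rodrigues' formula identifies the coefficient of `w^{n+m}` in `Q_vⁿ` with
`(-i)^m n!/(n+m)! R_n^m(v)/A_n^m` (`vecQ_pow_coeff`). For a unit vector, substituting `h = iζw` in
the Taylor expansion of `((v₃ + h)² - 1)ⁿ = (2iζ Q_v(w))ⁿ` gives the coefficients with `m ≥ 0`,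
and the symmetry `w ↦ 1/w` gives those with `m < 0`.

Multiplying out `Q_c^{n-ν} Q_{t-c}^ν`, its coefficient at `wⁿ` is exactly the sum defining
`S^R_{n,ν}(c,t)`, up to the factor `A_n^0 C(n,ν)` (`termSR_eq`). Cauchy's estimate on the unit
circle (`norm_coeff_le_of_forall_norm_eq_one`) bounds this coefficient by `‖c‖^{n-ν} ‖t-c‖^ν`. -/

open MeasureTheory Metric Filter Asymptotics Real

noncomputable section

namespace Paper

/-! ### Derivatives and coefficients of polynomials -/

open Polynomial in
theorem iteratedDeriv_polynomial_s14 {𝕜 : Type*} [NontriviallyNormedField 𝕜] (p : 𝕜[X]) (k : ℕ) :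
    iteratedDeriv k (fun x => p.eval x) = fun x => (derivative^[k] p).eval x := by
  induction k with
  | zero => simp
  | succ k ih =>
    rw [iteratedDeriv_succ, ih]
    funext x
    rw [Polynomial.deriv, Function.iterate_succ_apply']

open Polynomial in
theorem iterate_derivative_eval_eq_taylor_coeff (p : ℝ[X]) (k : ℕ) (x : ℝ) :
    (derivative^[k] p).eval x = k.factorial * (taylor x p).coeff k := by
  rw [taylor_coeff, ← factorial_smul_hasseDeriv]
  simp

open Polynomial in
/-- Cauchy's estimate on the unit circle, applied to a polynomial. -/
theorem norm_coeff_le_of_forall_norm_eq_one (p : ℂ[X]) (M : ℝ)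
    (h : ∀ w : ℂ, ‖w‖ = 1 → ‖p.eval w‖ ≤ M) (k : ℕ) : ‖p.coeff k‖ ≤ M := by
  have h1 := Complex.norm_iteratedDeriv_le_of_forall_mem_sphere_norm_le (c := 0) (R := 1) (C := M)
    (f := fun w => p.eval w) k one_pos p.differentiable.diffContOnCl
    (fun z hz => h z (by simpa using hz))
  have h2 : iteratedDeriv k (fun w => p.eval w) 0 = (k.factorial : ℂ) * p.coeff k := by
    rw [iteratedDeriv_polynomial_s14]
    simp only
    rw [← coeff_zero_eq_eval_zero, coeff_iterate_derivative]
    simp [Nat.descFactorial_self]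
  rw [h2] at h1
  have h3 : (0 : ℝ) < k.factorial := by positivity
  simp only [norm_mul, Complex.norm_natCast, one_pow, div_one] at h1
  exact le_of_mul_le_mul_left h1 h3

/-! ### Laplace's polynomial and associated Legendre functions -/

open Polynomial in
/-- The quadratic polynomial `Q(w) = (i/2) ζ w² + x w + (i/2) ζ̄`. On the unit circle
`Q(w) = w (x + i Re(ζ w))`, so `Q(w)ⁿ / wⁿ` is the integrand of Laplace's integral
representation of the solid harmonics of degree `n`, multiplied out so as to be a polynomial
in `w`. -/
def laplaceQ (ζ : ℂ) (x : ℝ) : ℂ[X] :=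
  C (Complex.I / 2 * ζ) * X ^ 2 + C (x : ℂ) * X + C (Complex.I / 2 * (starRingEnd ℂ) ζ)

theorem norm_laplaceQ_eval_le (ζ : ℂ) (x : ℝ) (w : ℂ) (hw : ‖w‖ = 1) :
    ‖(laplaceQ ζ x).eval w‖ ≤ √(‖ζ‖ ^ 2 + x ^ 2) := by
  have hww : w * (starRingEnd ℂ) w = 1 := by
    rw [Complex.mul_conj, Complex.normSq_eq_norm_sq, hw]; simp
  have h1 : (laplaceQ ζ x).eval w = w * ((x : ℂ) + ((ζ * w).re : ℂ) * Complex.I) := by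
    rw [Complex.re_eq_add_conj, map_mul]
    simp only [laplaceQ, Polynomial.eval_add, Polynomial.eval_mul, Polynomial.eval_C,
      Polynomial.eval_pow, Polynomial.eval_X]
    linear_combination -(Complex.I / 2 * (starRingEnd ℂ) ζ) * hww
  rw [h1, norm_mul, hw, one_mul, Complex.norm_add_mul_I]
  apply Real.sqrt_le_sqrt
  have h2 : |(ζ * w).re| ≤ ‖ζ‖ := by
    simpa [hw] using Complex.abs_re_le_norm (ζ * w)
  have h3 := sq_le_sq' (by linarith [abs_nonneg (ζ * w).re, norm_nonneg ζ]) h2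
  rw [sq_abs] at h3
  linarith

open Polynomial in
/-- With `h = iζw` and `|ζ|² + x² = 1` one has `(x + h)² - 1 = 2iζ Q(w)`. Hence the coefficients
of `Qⁿ` are rescaled Taylor coefficients at `x` of the polynomial `(X² - 1)ⁿ` in Rodrigues'
formula. -/
theorem laplaceQ_pow_coeff_eq_taylor (n m : ℕ) (ζ : ℂ) (x : ℝ) (h : ‖ζ‖ ^ 2 + x ^ 2 = 1) :
    ((laplaceQ ζ x) ^ n).coeff (n + m) =
      (Complex.I * ζ) ^ m / 2 ^ n * ((taylor x ((X ^ 2 - 1 : ℝ[X]) ^ n)).coeff (n + m) : ℝ) := by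
  have hT : taylor x ((X ^ 2 - 1 : ℝ[X]) ^ n) =
      (X ^ 2 + C (2 * x) * X - C (‖ζ‖ ^ 2)) ^ n := by
    have : ‖ζ‖ ^ 2 = 1 - x ^ 2 := by linarith
    rw [taylor_pow, this]
    congr 1
    simp only [taylor_apply, sub_comp, pow_comp, X_comp, one_comp, C_sub, C_mul, C_pow, C_1]
    have : (C 2 : ℝ[X]) = 2 := rfl
    rw [this]; ring
  rw [hT]
  -- The substitution `X ↦ iζX` used below is invertible only for `ζ ≠ 0`.
  rcases eq_or_ne ζ 0 with rfl | hζ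
  · have e1 : laplaceQ 0 x = C (x : ℂ) * X := by simp [laplaceQ]
    have e2 : (X ^ 2 + C (2 * x) * X - C (‖(0 : ℂ)‖ ^ 2) : ℝ[X]) ^ n =
        (X + C (2 * x)) ^ n * X ^ n := by
      rw [← mul_pow]; simp; ring
    rw [e1, e2, mul_pow, ← C_pow, coeff_C_mul, coeff_X_pow, add_comm n m, coeff_mul_X_pow]
    rcases Nat.eq_zero_or_pos m with rfl | hm
    · simp [coeff_zero_eq_eval_zero, mul_pow]
    · simp [hm.ne']
  · obtain ⟨a, ha⟩ : ∃ a : ℂ, a = Complex.I * ζ := ⟨_, rfl⟩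
    rw [← ha]
    have ha0 : a ≠ 0 := ha ▸ mul_ne_zero Complex.I_ne_zero hζ
    have hid : ((X ^ 2 + C (2 * x) * X - C (‖ζ‖ ^ 2) : ℝ[X]).map Complex.ofRealHom).comp (C a * X)
        = C (2 * a) * laplaceQ ζ x := by
      have hn : ((‖ζ‖ : ℂ)) ^ 2 = ζ * (starRingEnd ℂ) ζ := by
        rw [Complex.mul_conj, Complex.normSq_eq_norm_sq]; simp
      simp only [Polynomial.map_sub, Polynomial.map_add, Polynomial.map_mul, Polynomial.map_pow,
        map_X, map_C, sub_comp, add_comp, mul_comp, pow_comp, X_comp, C_comp, laplaceQ,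
        Complex.ofRealHom_eq_coe, Complex.ofReal_mul, Complex.ofReal_pow, hn, Complex.ofReal_ofNat]
      have e1 : C (2 * a) * (C (Complex.I / 2 * ζ) * X ^ 2 + C (x : ℂ) * X +
          C (Complex.I / 2 * (starRingEnd ℂ) ζ)) =
          C (2 * a * (Complex.I / 2 * ζ)) * X ^ 2 + C (2 * a * x) * X +
          C (2 * a * (Complex.I / 2 * (starRingEnd ℂ) ζ)) := by
        simp only [C_mul]; ring
      have e2 : 2 * a * (Complex.I / 2 * ζ) = a ^ 2 := by rw [ha]; ring
      have e3 : 2 * a * (Complex.I / 2 * (starRingEnd ℂ) ζ) = - (ζ * (starRingEnd ℂ) ζ) := by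
        rw [ha]; linear_combination (ζ * (starRingEnd ℂ) ζ) * Complex.I_sq
      rw [e1, e2, e3]
      simp only [C_mul, C_neg, C_pow]
      ring
    have hpow := congrArg (fun p : ℂ[X] => (p ^ n).coeff (n + m)) hid
    simp only [← pow_comp, ← Polynomial.map_pow, mul_pow, ← C_pow] at hpow
    rw [comp_C_mul_X_coeff, coeff_map, coeff_C_mul] at hpow
    simp only [Complex.ofRealHom_eq_coe] at hpow
    rw [pow_add] at hpow
    have h2 : (2 : ℂ) ^ n ≠ 0 := pow_ne_zero _ two_ne_zero
    have h3 : a ^ n ≠ 0 := pow_ne_zero _ ha0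
    apply mul_left_cancel₀ (mul_ne_zero h2 h3)
    rw [← hpow]
    field_simp

open Polynomial in
theorem laplaceQ_pow_coeff_add (n m : ℕ) (ζ : ℂ) (x : ℝ) (h : ‖ζ‖ ^ 2 + x ^ 2 = 1) :
    ((laplaceQ ζ x) ^ n).coeff (n + m) =
      (Complex.I * ζ) ^ m * (n.factorial / (n + m).factorial) *
        (iteratedDeriv m (legendreP n) x : ℝ) := by
  have hL : iteratedDeriv m (legendreP n) x = (1 / ((2 : ℝ) ^ n * n.factorial)) *
      ((n + m).factorial * (taylor x ((X ^ 2 - 1 : ℝ[X]) ^ n)).coeff (n + m)) := by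
    have e : legendreP n = fun x =>
        (C (1 / ((2 : ℝ) ^ n * n.factorial)) * derivative^[n] ((X ^ 2 - 1 : ℝ[X]) ^ n)).eval x := by
      funext x
      have := congrFun (iteratedDeriv_polynomial_s14 ((X ^ 2 - 1 : ℝ[X]) ^ n) n) x
      simp only [eval_pow, eval_sub, eval_X, eval_one] at this
      rw [legendreP, this, eval_mul, eval_C]
    rw [e, iteratedDeriv_polynomial_s14]
    simp only
    rw [iterate_derivative_C_mul, eval_mul, eval_C, ← Function.iterate_add_apply,
      iterate_derivative_eval_eq_taylor_coeff, add_comm m n]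
  rw [laplaceQ_pow_coeff_eq_taylor n m ζ x h, hL]
  have h1 : ((n + m).factorial : ℂ) ≠ 0 := by exact_mod_cast (n + m).factorial_ne_zero
  have h2 : (n.factorial : ℂ) ≠ 0 := by exact_mod_cast n.factorial_ne_zero
  push_cast
  field_simp

open Polynomial in
theorem natDegree_laplaceQ_le (ζ : ℂ) (x : ℝ) : (laplaceQ ζ x).natDegree ≤ 2 := by
  unfold laplaceQ; compute_degree

open Polynomial in
/-- Reversing the coefficients of `Q` replaces `ζ` by its conjugate; this reduces negative orders
to positive ones. -/
theorem laplaceQ_pow_coeff_sub (n m : ℕ) (hm : m ≤ n) (ζ : ℂ) (x : ℝ) :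
    ((laplaceQ ζ x) ^ n).coeff (n - m) =
      ((laplaceQ ((starRingEnd ℂ) ζ) x) ^ n).coeff (n + m) := by
  have h1 : (laplaceQ ζ x).reflect 2 = laplaceQ ((starRingEnd ℂ) ζ) x := by
    have : C (x : ℂ) * X = C (x : ℂ) * X ^ 1 := by simp
    rw [laplaceQ, laplaceQ, reflect_add, reflect_add, this, reflect_C_mul_X_pow,
      reflect_C_mul_X_pow, reflect_C, revAt_le le_rfl, revAt_le one_le_two]
    simp
    ring
  have h2 : ∀ k : ℕ, ((laplaceQ ζ x) ^ k).reflect (2 * k) =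
      (laplaceQ ((starRingEnd ℂ) ζ) x) ^ k := by
    intro k
    induction k with
    | zero => simp
    | succ k ih =>
      rw [pow_succ, mul_add, mul_one, reflect_mul _ _ _ (natDegree_laplaceQ_le ζ x), ih, h1,
        pow_succ]
      exact (natDegree_pow_le_of_le k (natDegree_laplaceQ_le ζ x)).trans (by omega)
  rw [← h2 n, coeff_reflect, revAt_le (by omega)]
  congr 1
  omega

/-! ### Solid harmonics as coefficients -/

/-- The unnormalized solid harmonic `T_n^m(v) = ‖v‖ⁿ e^{imφ} P_n^m(cos θ)`, that is,
`R_n^m(v) / A_n^m`. -/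
def solidT (n : ℕ) (m : ℤ) (v : E3) : ℂ :=
  ((‖v‖ ^ n : ℝ) : ℂ) * (Complex.exp ((m : ℂ) *
      ((Complex.arg (((‖v‖⁻¹ • v) 0 : ℂ) + ((‖v‖⁻¹ • v) 1 : ℂ) * Complex.I) : ℝ) : ℂ) *
      Complex.I) * ((assocLegendre n m ((‖v‖⁻¹ • v) 2) : ℝ) : ℂ))

theorem solidR_eq (n : ℕ) (m : ℤ) (v : E3) : solidR n m v = (normA n m : ℂ) * solidT n m v := by
  simp only [solidR, sphHarm, solidT]; ring

theorem normA_ne_zero (n : ℕ) (m : ℤ) : normA n m ≠ 0 := by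
  unfold normA
  positivity

theorem E3_norm_sq (v : E3) : ‖((v 0 : ℂ) + (v 1 : ℂ) * Complex.I)‖ ^ 2 + v 2 ^ 2 = ‖v‖ ^ 2 := by
  rw [EuclideanSpace.norm_sq_eq, Fin.sum_univ_three, Complex.norm_add_mul_I,
    Real.sq_sqrt (by positivity)]
  simp

/-- The polynomial `laplaceQ` of a vector `v ∈ ℝ³`, with `ζ = v₁ + i v₂` and `x = v₃` in the
usual numbering of coordinates from one. -/
def vecQ (v : E3) : Polynomial ℂ := laplaceQ ((v 0 : ℂ) + (v 1 : ℂ) * Complex.I) (v 2)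

theorem norm_vecQ_eval_le (v : E3) (w : ℂ) (hw : ‖w‖ = 1) : ‖(vecQ v).eval w‖ ≤ ‖v‖ := by
  have := norm_laplaceQ_eval_le ((v 0 : ℂ) + (v 1 : ℂ) * Complex.I) (v 2) w hw
  rwa [E3_norm_sq, Real.sqrt_sq (norm_nonneg _)] at this

/-- Polar form of `ζ^m`, with the modulus written as the factor `(1 - x²)^{m/2}` of `P_n^m`. -/
theorem pow_eq_rpow_mul_exp_arg (ζ : ℂ) (x : ℝ) (h : ‖ζ‖ ^ 2 + x ^ 2 = 1) (m : ℕ) :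
    ζ ^ m = (((1 - x ^ 2) ^ ((m : ℝ) / 2) : ℝ) : ℂ) *
      Complex.exp ((m : ℂ) * (Complex.arg ζ : ℂ) * Complex.I) := by
  have h1 : 1 - x ^ 2 = ‖ζ‖ ^ 2 := by linarith
  have h2 : (1 - x ^ 2) ^ ((m : ℝ) / 2) = ‖ζ‖ ^ m := by
    rw [h1, ← Real.rpow_natCast ‖ζ‖ 2, ← Real.rpow_mul (norm_nonneg _), ← Real.rpow_natCast]
    congr 1; push_cast; ring
  rw [h2, mul_assoc, Complex.exp_nat_mul, Complex.ofReal_pow, ← mul_pow,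
    Complex.norm_mul_exp_arg_mul_I]

theorem laplaceQ_pow_coeff_pos (n m : ℕ) (ζ : ℂ) (x : ℝ) (h : ‖ζ‖ ^ 2 + x ^ 2 = 1) :
    ((laplaceQ ζ x) ^ n).coeff (n + m) =
      (-Complex.I) ^ m * (n.factorial / (n + m).factorial) *
      (Complex.exp ((m : ℂ) * (Complex.arg ζ : ℂ) * Complex.I) *
        (assocLegendreNat n m x : ℝ)) := by
  rw [laplaceQ_pow_coeff_add n m ζ x h, mul_pow, pow_eq_rpow_mul_exp_arg ζ x h,
    assocLegendreNat, neg_pow]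
  have : ((-1 : ℂ) ^ m) * (-1) ^ m = 1 := by rw [← mul_pow]; simp
  push_cast
  linear_combination (-(Complex.I ^ m * (((1 - x ^ 2) ^ ((m : ℝ) / 2) : ℝ) : ℂ) *
      Complex.exp ((m : ℂ) * (Complex.arg ζ : ℂ) * Complex.I) *
      (n.factorial / (n + m).factorial) * (iteratedDeriv m (legendreP n) x : ℝ))) * this

theorem laplaceQ_pow_coeff_neg (n m : ℕ) (hm : m ≤ n) (ζ : ℂ) (x : ℝ)
    (h : ‖ζ‖ ^ 2 + x ^ 2 = 1) :
    ((laplaceQ ζ x) ^ n).coeff (n - m) =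
      Complex.I ^ m * (n.factorial / (n + m).factorial) *
      (Complex.exp (-(m : ℂ) * (Complex.arg ζ : ℂ) * Complex.I) *
        ((-1) ^ m * (assocLegendreNat n m x : ℝ))) := by
  rw [laplaceQ_pow_coeff_sub n m hm, laplaceQ_pow_coeff_add n m _ x (by simpa using h), mul_pow,
    ← map_pow, pow_eq_rpow_mul_exp_arg ζ x h, assocLegendreNat]
  have : ((-1 : ℂ) ^ m) * (-1) ^ m = 1 := by rw [← mul_pow]; simp
  rw [map_mul, ← Complex.exp_conj]
  simp only [map_mul, Complex.conj_ofReal, Complex.conj_I, map_natCast]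
  rw [show (m : ℂ) * (Complex.arg ζ : ℂ) * -Complex.I = -(m : ℂ) * (Complex.arg ζ : ℂ) * Complex.I
    by ring]
  push_cast
  linear_combination (-(Complex.I ^ m * (((1 - x ^ 2) ^ ((m : ℝ) / 2) : ℝ) : ℂ) *
      Complex.exp (-(m : ℂ) * (Complex.arg ζ : ℂ) * Complex.I) *
      (n.factorial / (n + m).factorial) * (iteratedDeriv m (legendreP n) x : ℝ))) * this

/-- The coefficients of `Qⁿ` are associated Legendre functions:
the one at `w^{n+m}` is `(-i)^m n!/(n+m)! e^{im arg ζ} P_n^m(x)`. -/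
theorem laplaceQ_pow_coeff (n : ℕ) (m : ℤ) (k : ℕ) (hk : (k : ℤ) = n + m) (hm : m ≤ n)
    (ζ : ℂ) (x : ℝ) (h : ‖ζ‖ ^ 2 + x ^ 2 = 1) :
    ((laplaceQ ζ x) ^ n).coeff k =
      (-Complex.I) ^ m * (n.factorial / k.factorial) *
      (Complex.exp ((m : ℂ) * (Complex.arg ζ : ℂ) * Complex.I) *
        (assocLegendre n m x : ℝ)) := by
  rcases le_or_gt 0 m with h0 | h0
  · lift m to ℕ using h0
    obtain rfl : k = n + m := by omega
    rw [laplaceQ_pow_coeff_pos n m ζ x h]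
    simp [assocLegendre]
  · obtain ⟨j, rfl⟩ : ∃ j : ℕ, m = -(j : ℤ) := ⟨(-m).toNat, by omega⟩
    obtain rfl : k = n - j := by omega
    rw [laplaceQ_pow_coeff_neg n j (by omega) ζ x h, assocLegendre, if_neg (by omega)]
    have h1 : ((n + j).factorial : ℂ) ≠ 0 := by exact_mod_cast (n + j).factorial_ne_zero
    have h2 : ((n - j).factorial : ℂ) ≠ 0 := by exact_mod_cast (n - j).factorial_ne_zero
    have h3 : (-Complex.I) ^ (-(j : ℤ)) = Complex.I ^ j := by
      rw [zpow_neg, zpow_natCast, ← inv_pow]; congr 1; simp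
    rw [h3]
    simp only [neg_neg, Int.toNat_natCast]
    push_cast
    field_simp

theorem vecQ_smul (r : ℝ) (v : E3) : vecQ (r • v) = Polynomial.C (r : ℂ) * vecQ v := by
  simp only [vecQ, laplaceQ, PiLp.smul_apply, smul_eq_mul, map_add, map_mul, Complex.ofReal_mul,
    Complex.conj_ofReal]
  ring

theorem vecQ_pow_coeff (n : ℕ) (m : ℤ) (k : ℕ) (hk : (k : ℤ) = n + m) (hm : m ≤ n) (v : E3) :
    ((vecQ v) ^ n).coeff k =
      (-Complex.I) ^ m * (n.factorial / k.factorial) * solidT n m v := by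
  rcases eq_or_ne v 0 with rfl | hv
  · rcases Nat.eq_zero_or_pos n with rfl | hn
    · obtain rfl : m = 0 := by omega
      obtain rfl : k = 0 := by omega
      simp [solidT, assocLegendre, assocLegendreNat, legendreP]
    · have : vecQ 0 = 0 := by simp [vecQ, laplaceQ]
      simp [this, solidT, hn.ne']
  · have hr : ‖v‖ ≠ 0 := norm_ne_zero_iff.mpr hv
    set u : E3 := ‖v‖⁻¹ • v with hu
    have hvu : v = ‖v‖ • u := by rw [hu, smul_smul, mul_inv_cancel₀ hr, one_smul]
    have hun : ‖u‖ = 1 := by rw [hu, norm_smul, norm_inv, norm_norm, inv_mul_cancel₀ hr]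
    have h1 : vecQ v = Polynomial.C (‖v‖ : ℂ) * vecQ u := by
      rw [← vecQ_smul, ← hvu]
    have h2 := laplaceQ_pow_coeff n m k hk hm _ (u 2) ((E3_norm_sq u).trans (by rw [hun]; norm_num))
    rw [h1, mul_pow, ← Polynomial.C_pow, Polynomial.coeff_C_mul, vecQ, h2, solidT, ← hu]
    push_cast
    ring

/-- Up to the constant `A_n^0 C(n,ν)`, the term `S^R_{n,ν}(c,t)` is the coefficient of `wⁿ` in
`Q_c^{n-ν} Q_{t-c}^ν`: the two binomial weights agree because
`C(n,ν) (n-ν)! ν! / ((n-ν-μ)! (ν+μ)!) = C(n,ν+μ)`, and the phases `(-i)^{-μ}`, `(-i)^μ` cancel. -/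
theorem termSR_eq (n ν : ℕ) (hν : ν ≤ n) (c t : E3) :
    termSR n ν c t = (normA n 0 : ℂ) * (n.choose ν *
      ((vecQ c) ^ (n - ν) * (vecQ (t - c)) ^ ν).coeff n) := by
  rw [termSR, Polynomial.coeff_mul, Finset.mul_sum _ _ (n.choose ν : ℂ)]
  congr 1
  apply Finset.sum_of_injOn (fun μ : ℤ => (((n : ℤ) - ν - μ).toNat, ((ν : ℤ) + μ).toNat))
  · intro a ha b hb hab
    simp only [Finset.coe_inter, Finset.coe_Icc, Set.mem_inter_iff, Set.mem_Icc] at ha hb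
    simp only [Prod.mk.injEq] at hab
    omega
  · intro a ha
    simp only [Finset.coe_inter, Finset.coe_Icc, Set.mem_inter_iff, Set.mem_Icc] at ha
    simp only [Finset.mem_coe, Finset.HasAntidiagonal.mem_antidiagonal]
    omega
  · -- Products of coefficients outside the range of summation vanish by degree.
    rintro ⟨a, b⟩ hab hnot
    rw [Finset.HasAntidiagonal.mem_antidiagonal] at hab
    simp only at hab
    have hdeg : ∀ (v : E3) (k : ℕ), ((vecQ v) ^ k).natDegree ≤ k * 2 := fun v k =>
      Polynomial.natDegree_pow_le_of_le k (natDegree_laplaceQ_le _ _)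
    by_cases h1 : (n - ν) * 2 < a
    · simp [Polynomial.coeff_eq_zero_of_natDegree_lt ((hdeg c (n - ν)).trans_lt h1)]
    by_cases h2 : ν * 2 < b
    · simp [Polynomial.coeff_eq_zero_of_natDegree_lt ((hdeg (t - c) ν).trans_lt h2)]
    exfalso
    apply hnot
    refine ⟨(b : ℤ) - ν, ?_, ?_⟩
    · simp only [Finset.coe_inter, Finset.coe_Icc, Set.mem_inter_iff, Set.mem_Icc]
      omega
    · simp only [Prod.mk.injEq]
      omega
  · intro μ hμ
    simp only [Finset.mem_inter, Finset.mem_Icc] at hμ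
    obtain ⟨a, ha⟩ : ∃ a : ℕ, (a : ℤ) = (n : ℤ) - ν - μ := ⟨((n : ℤ) - ν - μ).toNat, by omega⟩
    obtain ⟨b, hb⟩ : ∃ b : ℕ, (b : ℤ) = (ν : ℤ) + μ := ⟨((ν : ℤ) + μ).toNat, by omega⟩
    simp only [← ha, ← hb, Int.toNat_natCast]
    rw [vecQ_pow_coeff (n - ν) (-μ) a (by omega) (by omega),
      vecQ_pow_coeff ν μ b (by omega) (by omega), solidR_eq, solidR_eq]
    have hA1 : (normA (n - ν) (-μ) : ℂ) ≠ 0 := by exact_mod_cast normA_ne_zero _ _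
    have hA2 : (normA ν μ : ℂ) ≠ 0 := by exact_mod_cast normA_ne_zero _ _
    have hI : (-Complex.I) ^ (-μ) * (-Complex.I) ^ μ = 1 := by
      rw [← zpow_add₀ (by simp)]; simp
    have hab : n = a + b := by omega
    have hch : (n.choose b : ℂ) = n.choose ν * ((n - ν).factorial / a.factorial) *
        (ν.factorial / b.factorial) := by
      rw [Nat.cast_choose ℂ hν, Nat.cast_choose ℂ (by omega : b ≤ n),
        show n - b = a by omega]
      have f : ∀ k : ℕ, (k.factorial : ℂ) ≠ 0 := fun k => by exact_mod_cast k.factorial_ne_zero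
      have f1 := f a; have f2 := f b; have f3 := f ν; have f4 := f (n - ν)
      field_simp
    rw [Complex.ofReal_natCast, hch]
    trans (n.choose ν * ((n - ν).factorial / a.factorial) * (ν.factorial / b.factorial)) *
        (solidT (n - ν) (-μ) c * solidT ν μ (t - c)) * (1 : ℂ)
    · field_simp
    · rw [← hI]; ring

/-- The `ν`-th term of the local expansion of `R_n^0` about `c`
satisfies `|S^R_{n,ν}(c,t)| ≤ √((2n+1)/(4π)) C(n,ν) ‖c‖^{n−ν} ‖t−c‖^ν`. -/
theorem statement14 (n ν : ℕ) (hν : ν ≤ n) (c t : E3) :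
    ‖termSR n ν c t‖ ≤
      Real.sqrt ((2 * n + 1) / (4 * π)) * (n.choose ν : ℝ) *
        ‖c‖ ^ (n - ν) * ‖t - c‖ ^ ν := by
  have hA : normA n 0 = √((2 * n + 1) / (4 * π)) := by
    have : (n.factorial : ℝ) ≠ 0 := by exact_mod_cast n.factorial_ne_zero
    simp [normA, this]
  have hcoeff : ‖((vecQ c) ^ (n - ν) * (vecQ (t - c)) ^ ν).coeff n‖ ≤
      ‖c‖ ^ (n - ν) * ‖t - c‖ ^ ν := by
    apply norm_coeff_le_of_forall_norm_eq_one
    intro w hw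
    rw [Polynomial.eval_mul, Polynomial.eval_pow, Polynomial.eval_pow, norm_mul, norm_pow, norm_pow]
    gcongr
    · exact norm_vecQ_eval_le c w hw
    · exact norm_vecQ_eval_le (t - c) w hw
  rw [termSR_eq n ν hν c t, norm_mul, norm_mul, hA, Complex.norm_real, Complex.norm_natCast,
    Real.norm_of_nonneg (Real.sqrt_nonneg _), mul_assoc, mul_assoc]
  gcongr

end Paper
end
end

section
/- Let n ≥ 0 and ν ≥ 0 be integers, and c, t ∈ ℝ³ with c ≠ 0 and t ≠ c. Define the ν-th term of the local expansion of the irregular solid harmonic I_n^0 about c as S^I_{n,ν}(c,t) = A_n^0 Σ_{μ ∈ I(0,ν)} (−1)^{ν−μ} C(n+ν−μ, n) · I_{n+ν}^μ(c) R_ν^{−μ}(t−c) / (A_{n+ν}^μ A_ν^{−μ}), where A_n^m = √((2n+1)/(4π) · (n−m)!/(n+m)!). Then |S^I_{n,ν}(c,t)| ≤ √((2n+1)/(4π)) · C(n+ν, n) · ‖c‖^{−(n+ν+1)} · ‖t−c‖^ν. -/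
/-!
After the factors `normA` cancel, the `μ`-th summand of `termSI n ν c t` has absolute value
`‖c‖⁻⁽ᴺ⁺¹⁾ ‖t - c‖^ν C(N - μ, n) |P_N^μ(x)| |P_ν^{-μ}(y)|`, where `N = n + ν` and `x, y ∈ [-1, 1]`
are the third coordinates of the unit vectors along `c` and `t - c`. Write
`B_N^m(x) = (N-m)!/(N+m)! P_N^m(x)²`. Two facts give the bound:

* `C(N - μ, n)² = C(N - μ, n) C(N + μ, n) · (N-μ)!/(N+μ)! · (ν+μ)!/(ν-μ)!`, and
  `C(N - μ, n) C(N + μ, n) ≤ C(N, n)²` by log-concavity (`choose_sub_mul_choose_add_le`). Together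
  with the inequality of arithmetic and geometric means, this bounds `C(N - μ, n) |P_N^μ(x)| |P_ν^{-μ}(y)|` by
  `C(N, n) (B_N^μ(x) + B_ν^{-μ}(y)) / 2` (`summand_le`).
* Unsöld's theorem, the diagonal case of the addition theorem: `∑_{|m| ≤ N} B_N^m(x) = 1` on
  `[-1, 1]` (`unsold`).

For Unsöld's theorem, `B_N^m` and `B_N^{-m}` agree and are polynomials in `x`, so the sum is a
polynomial. Legendre's equation, differentiated `m` times, makes its derivative a telescoping sum
that vanishes, so the polynomial is constant, and its value at `1` is `P_N(1)² = 1`.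
-/

open MeasureTheory Metric Filter Asymptotics Real

noncomputable section

namespace Paper

/-! ### Legendre polynomials and their differential equation -/

open Polynomial in
/-- The `m`-th derivative of the Legendre polynomial of degree `N`, as a polynomial. -/
def legPoly (N m : ℕ) : ℝ[X] :=
  C (1 / ((2 : ℝ) ^ N * N.factorial)) * derivative^[N + m] ((X ^ 2 - 1) ^ N)

open Polynomial in
/-- The polynomial `(X² - 1)^N` solves a first-order equation; this is that equation
differentiated `k + 1` times. -/
lemma rodrigues_ode (N k : ℕ) :
    (X ^ 2 - 1 : ℝ[X]) * derivative^[k + 2] ((X ^ 2 - 1) ^ N)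
      + 2 * ((k : ℝ[X]) + 1 - (N : ℝ[X])) * X * derivative^[k + 1] ((X ^ 2 - 1) ^ N)
      + ((k : ℝ[X]) + 1) * ((k : ℝ[X]) - 2 * (N : ℝ[X])) * derivative^[k] ((X ^ 2 - 1) ^ N) = 0 := by
  have hC : (C 2 : ℝ[X]) = 2 := map_ofNat C 2
  induction k with
  | zero =>
    have h1 : (X ^ 2 - 1 : ℝ[X]) * derivative ((X ^ 2 - 1) ^ N)
        = 2 * (N : ℝ[X]) * X * (X ^ 2 - 1) ^ N := by
      cases N with
      | zero => simp
      | succ N =>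
        simp [derivative_pow, hC]
        ring
    have h2 := congrArg derivative h1
    simp only [derivative_mul, derivative_sub, derivative_X_pow, derivative_one,
      derivative_natCast, derivative_ofNat, derivative_X] at h2
    simp only [Function.iterate_succ_apply', Function.iterate_zero_apply]
    simp [hC] at h2 ⊢
    linear_combination h2
  | succ k ih =>
    have h2 := congrArg derivative ih
    simp only [derivative_mul, derivative_add, derivative_sub, derivative_X_pow, derivative_one,
      derivative_natCast, derivative_ofNat, derivative_X,
      ← Function.iterate_succ_apply' derivative] at h2
    simp [hC] at h2 ⊢
    linear_combination h2

open Polynomial in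
lemma derivative_legPoly (N m : ℕ) : derivative (legPoly N m) = legPoly N (m + 1) := by
  simp only [legPoly, derivative_mul, derivative_C, zero_mul, zero_add,
    ← Function.iterate_succ_apply' derivative]
  rfl

open Polynomial in
/-- Legendre's differential equation, differentiated `m` times. -/
lemma legPoly_ode (N m : ℕ) :
    (1 - X ^ 2 : ℝ[X]) * legPoly N (m + 2) - 2 * ((m : ℝ[X]) + 1) * X * legPoly N (m + 1)
      + ((N : ℝ[X]) - (m : ℝ[X])) * ((N : ℝ[X]) + (m : ℝ[X]) + 1) * legPoly N m = 0 := by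
  have h := rodrigues_ode N (N + m)
  simp only [legPoly, ← add_assoc]
  push_cast at h
  linear_combination (-C (1 / ((2 : ℝ) ^ N * N.factorial))) * h

open Polynomial in
lemma legPoly_succ_self (N : ℕ) : legPoly N (N + 1) = 0 := by
  have h : ((X ^ 2 - 1 : ℝ[X]) ^ N).natDegree < N + (N + 1) := by
    have h2 : (X ^ 2 - 1 : ℝ[X]).natDegree ≤ 2 := by compute_degree
    have h3 := natDegree_pow_le_of_le N h2
    omega
  rw [legPoly, iterate_derivative_eq_zero h, mul_zero]

open Polynomial in
lemma legPoly_eval_one (N : ℕ) : (legPoly N 0).eval 1 = 1 := by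
  have h := aeval_iterate_derivative_self (A := ℝ) ((X ^ 2 - 1 : ℝ[X]) ^ N) N 1
    (p' := (X + 1) ^ N) (by
      rw [Algebra.algebraMap_self, Polynomial.map_id, ← mul_pow]
      congr 1
      simp only [map_one]
      ring)
  rw [coe_aeval_eq_eval] at h
  rw [legPoly, eval_mul, eval_C, add_zero, h]
  have : (N.factorial : ℝ) ≠ 0 := by positivity
  simp
  norm_num
  field_simp

/-! ### Unsöld's theorem for polynomials -/

/-- The factorial ratio `(N - m)! / (N + m)!`. -/
def facRatio (N m : ℕ) : ℝ := ((N - m).factorial : ℝ) / ((N + m).factorial : ℝ)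

lemma facRatio_pos (N m : ℕ) : 0 < facRatio N m := by unfold facRatio; positivity

lemma facRatio_succ {N m : ℕ} (h : m < N) :
    facRatio N m = facRatio N (m + 1) * ((N - m) * (N + m + 1)) := by
  obtain ⟨d, rfl⟩ : ∃ d, N = m + 1 + d := ⟨N - m - 1, by omega⟩
  have e1 : m + 1 + d - m = d + 1 := by omega
  have e2 : m + 1 + d - (m + 1) = d := by omega
  have e3 : m + 1 + d + (m + 1) = (m + 1 + d + m) + 1 := by omega
  simp only [facRatio, e1, e2, e3, Nat.factorial_succ]
  have : ((m + 1 + d + m).factorial : ℝ) ≠ 0 := by positivity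
  have : (m : ℝ) + 1 + d + m + 1 ≠ 0 := by positivity
  push_cast
  field_simp
  ring

open Polynomial in
/-- The derivative of the partial sums in Unsöld's theorem telescopes. -/
lemma derivative_unsold_partial (N M : ℕ) (h : M ≤ N) :
    derivative (legPoly N 0 ^ 2 + 2 * ∑ m ∈ Finset.range M,
        C (facRatio N (m + 1)) * (1 - X ^ 2) ^ (m + 1) * legPoly N (m + 1) ^ 2)
      = 2 * C (facRatio N M) * (1 - X ^ 2) ^ M * legPoly N M * legPoly N (M + 1) := by
  have hC : (C 2 : ℝ[X]) = 2 := map_ofNat C 2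
  induction M with
  | zero =>
    have : facRatio N 0 = 1 := by
      have : (N.factorial : ℝ) ≠ 0 := by positivity
      simp [facRatio, this]
    simp [derivative_pow, derivative_legPoly, this, hC]
  | succ M ih =>
    have ode := legPoly_ode N M
    have hr : C (facRatio N M)
        = C (facRatio N (M + 1)) * (((N : ℝ[X]) - (M : ℝ[X])) * ((N : ℝ[X]) + (M : ℝ[X]) + 1)) := by
      rw [facRatio_succ (by omega)]; simp
    rw [Finset.sum_range_succ, mul_add, ← add_assoc, derivative_add, ih (by omega)]
    simp [derivative_mul, derivative_pow, derivative_legPoly, hC]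
    rw [hr]
    linear_combination (2 * C (facRatio N (M + 1)) * (1 - X ^ 2) ^ M * legPoly N (M + 1)) * ode

open Polynomial in
lemma unsold_poly (N : ℕ) :
    legPoly N 0 ^ 2 + 2 * ∑ m ∈ Finset.range N,
      C (facRatio N (m + 1)) * (1 - X ^ 2) ^ (m + 1) * legPoly N (m + 1) ^ 2 = 1 := by
  have h := derivative_unsold_partial N N le_rfl
  rw [legPoly_succ_self, mul_zero] at h
  have h2 := eq_C_of_derivative_eq_zero h
  set F := legPoly N 0 ^ 2 + 2 * ∑ m ∈ Finset.range N,
      C (facRatio N (m + 1)) * (1 - X ^ 2) ^ (m + 1) * legPoly N (m + 1) ^ 2 with hF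
  have h3 : F.eval 1 = 1 := by
    simp [hF, eval_finsetSum, legPoly_eval_one]
  rw [h2, eval_C] at h3
  rw [h2, h3, C_1]

/-! ### Unsöld's theorem for associated Legendre functions -/

open Polynomial in
lemma iteratedDeriv_eval (p : ℝ[X]) (k : ℕ) :
    iteratedDeriv k (fun x => p.eval x) = fun x => (derivative^[k] p).eval x := by
  induction k with
  | zero => simp
  | succ k ih =>
    rw [iteratedDeriv_succ, ih, Function.iterate_succ_apply']
    ext x
    simp

lemma legendreP_eq (N : ℕ) : legendreP N = fun x => (legPoly N 0).eval x := by
  ext x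
  have h : (fun t : ℝ => (t ^ 2 - 1) ^ N)
      = fun t => ((Polynomial.X ^ 2 - 1 : Polynomial ℝ) ^ N).eval t := by
    ext t; simp
  rw [legendreP, h, iteratedDeriv_eval]
  simp [legPoly]

lemma iterate_derivative_legPoly (N m : ℕ) :
    Polynomial.derivative^[m] (legPoly N 0) = legPoly N m := by
  induction m with
  | zero => rfl
  | succ m ih => rw [Function.iterate_succ_apply', ih, derivative_legPoly]

lemma assocLegendreNat_sq (N m : ℕ) {x : ℝ} (hx : |x| ≤ 1) :
    assocLegendreNat N m x ^ 2 = (1 - x ^ 2) ^ m * (legPoly N m).eval x ^ 2 := by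
  have h0 : 0 ≤ 1 - x ^ 2 := by
    have := (sq_le_one_iff_abs_le_one x).2 hx
    linarith
  have h1 : ((1 - x ^ 2) ^ ((m : ℝ) / 2)) ^ 2 = (1 - x ^ 2) ^ m := by
    rw [← Real.rpow_natCast _ 2, ← Real.rpow_mul h0, ← Real.rpow_natCast _ m]
    norm_num
  rw [assocLegendreNat, legendreP_eq, iteratedDeriv_eval, iterate_derivative_legPoly, mul_pow,
    mul_pow, h1, ← pow_mul, mul_comm m 2, pow_mul]
  simp

/-- The squared, normalized associated Legendre function
`B_N^m(x) = (N-m)!/(N+m)! · P_N^m(x)²`, for `|m| ≤ N`. -/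
def legSq (N : ℕ) (m : ℤ) (x : ℝ) : ℝ :=
  ((((N : ℤ) - m).toNat.factorial : ℝ) / (((N : ℤ) + m).toNat.factorial : ℝ)) *
    assocLegendre N m x ^ 2

lemma legSq_nonneg (N : ℕ) (m : ℤ) (x : ℝ) : 0 ≤ legSq N m x := by
  unfold legSq; positivity

lemma legSq_eq {N : ℕ} {m : ℤ} (h1 : -(N : ℤ) ≤ m) (h2 : m ≤ N) {x : ℝ} (hx : |x| ≤ 1) :
    legSq N m x
      = facRatio N m.natAbs * ((1 - x ^ 2) ^ m.natAbs * (legPoly N m.natAbs).eval x ^ 2) := by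
  rw [← assocLegendreNat_sq N _ hx]
  obtain ⟨k, rfl | rfl⟩ := m.eq_nat_or_neg
  · have e1 : ((N : ℤ) - k).toNat = N - k := by omega
    have e2 : ((N : ℤ) + k).toNat = N + k := by omega
    simp [legSq, assocLegendre, facRatio, e1, e2]
  · rcases Nat.eq_zero_or_pos k with rfl | hk
    · simp [legSq, assocLegendre, facRatio]
    have e1 : ((N : ℤ) - -k).toNat = N + k := by omega
    have e2 : ((N : ℤ) + -k).toNat = N - k := by omega
    have e3 : ¬ (0 ≤ -(k : ℤ)) := by omega
    have hs : ((-1 : ℝ) ^ k) ^ 2 = 1 := by rw [← pow_mul, mul_comm, pow_mul]; simp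
    have : ((N + k).factorial : ℝ) ≠ 0 := by positivity
    have : ((N - k).factorial : ℝ) ≠ 0 := by positivity
    simp only [legSq, assocLegendre, facRatio, e1, e2, e3, if_false, neg_neg, Int.toNat_natCast,
      mul_pow, hs, Int.natAbs_neg, Int.natAbs_natCast, one_mul]
    field_simp

/-- Unsöld's theorem, in the variable `x = cos θ`. -/
lemma unsold (N : ℕ) {x : ℝ} (hx : |x| ≤ 1) :
    ∑ m ∈ Finset.Icc (-(N : ℤ)) N, legSq N m x = 1 := by
  set f : ℤ → ℝ := fun m =>
    facRatio N m.natAbs * ((1 - x ^ 2) ^ m.natAbs * (legPoly N m.natAbs).eval x ^ 2) with hf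
  have hfr : facRatio N 0 = 1 := by
    have : (N.factorial : ℝ) ≠ 0 := by positivity
    simp [facRatio, this]
  have h := congrArg (Polynomial.eval x) (unsold_poly N)
  simp [Polynomial.eval_finsetSum] at h
  calc ∑ m ∈ Finset.Icc (-(N : ℤ)) N, legSq N m x = ∑ m ∈ Finset.Icc (-(N : ℤ)) N, f m := by
        refine Finset.sum_congr rfl fun m hm => ?_
        rw [Finset.mem_Icc] at hm
        exact legSq_eq hm.1 hm.2 hx
    _ = 1 := by
        rw [Finset.sum_Icc_of_even_eq_range (fun m => by simp [hf]), Finset.sum_range_succ']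
        simp only [hf, Int.natAbs_natCast, Int.natAbs_zero, Nat.cast_zero, hfr]
        refine Eq.trans ?_ h
        simp only [nsmul_eq_mul, ← mul_assoc]
        push_cast
        ring

/-! ### Estimate of one summand -/

/-- Log-concavity of `a ↦ C(a, n)`, in the symmetric form. -/
lemma choose_sub_mul_choose_add_le (N n k : ℕ) :
    (N - k).choose n * (N + k).choose n ≤ N.choose n ^ 2 := by
  have h : (N - k).descFactorial n * (N + k).descFactorial n ≤ N.descFactorial n ^ 2 := by
    simp only [Nat.descFactorial_eq_prod_range, ← Finset.prod_mul_distrib, ← Finset.prod_pow]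
    refine Finset.prod_le_prod' fun i _ => ?_
    rcases Nat.lt_or_ge (N - k) i with hi | hi
    · simp [Nat.sub_eq_zero_of_le hi.le]
    rcases Nat.lt_or_ge N k with hk | hk
    · have : N - k - i = 0 := by omega
      simp [this]
    obtain ⟨d, rfl⟩ : ∃ d, N = k + i + d := ⟨N - k - i, by omega⟩
    have e1 : k + i + d - k - i = d := by omega
    have e2 : k + i + d + k - i = 2 * k + d := by omega
    have e3 : k + i + d - i = k + d := by omega
    rw [e1, e2, e3]
    nlinarith
  simp only [Nat.descFactorial_eq_factorial_mul_choose] at h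
  have hp : 0 < n.factorial ^ 2 := by positivity
  refine Nat.le_of_mul_le_mul_left ?_ hp
  calc _ = n.factorial * (N - k).choose n * (n.factorial * (N + k).choose n) := by ring
    _ ≤ _ := h
    _ = _ := by ring

/-- The coefficient of a summand, squared, against the normalizing factorials of `P_{n+ν}^μ` and
`P_ν^{-μ}`. -/
lemma choose_sq_le {n ν : ℕ} {μ : ℤ} (h1 : -(ν : ℤ) ≤ μ) (h2 : μ ≤ ν) :
    (((n : ℤ) + ν - μ).toNat.choose n : ℝ) ^ 2 ≤ ((n + ν).choose n : ℝ) ^ 2 *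
      (((((n + ν : ℕ) : ℤ) - μ).toNat.factorial : ℝ) / ((((n + ν : ℕ) : ℤ) + μ).toNat.factorial : ℝ)
      * ((((ν : ℤ) - -μ).toNat.factorial : ℝ) / (((ν : ℤ) + -μ).toNat.factorial : ℝ))) := by
  obtain ⟨a, ha⟩ : ∃ a : ℕ, (ν : ℤ) - μ = a := ⟨((ν : ℤ) - μ).toNat, by omega⟩
  obtain ⟨b, hb⟩ : ∃ b : ℕ, (ν : ℤ) + μ = b := ⟨((ν : ℤ) + μ).toNat, by omega⟩
  have e1 : ((n : ℤ) + ν - μ).toNat = n + a := by omega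
  have e2 : (((n + ν : ℕ) : ℤ) - μ).toNat = n + a := by omega
  have e3 : (((n + ν : ℕ) : ℤ) + μ).toNat = n + b := by omega
  have e4 : ((ν : ℤ) - -μ).toNat = b := by omega
  have e5 : ((ν : ℤ) + -μ).toNat = a := by omega
  rw [e1, e2, e3, e4, e5]
  have hlc : ((n + a).choose n : ℝ) * ((n + b).choose n : ℝ) ≤ ((n + ν).choose n : ℝ) ^ 2 := by
    have h := choose_sub_mul_choose_add_le (n + ν) n μ.natAbs
    rcases le_total 0 μ with h0 | h0
    · rw [show n + ν - μ.natAbs = n + a by omega, show n + ν + μ.natAbs = n + b by omega] at h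
      exact_mod_cast h
    · rw [show n + ν - μ.natAbs = n + b by omega, show n + ν + μ.natAbs = n + a by omega,
        mul_comm] at h
      exact_mod_cast h
  have hpos : (0 : ℝ) ≤ ((n + a).factorial : ℝ) / ((n + b).factorial : ℝ)
      * ((b.factorial : ℝ) / (a.factorial : ℝ)) := by positivity
  refine le_trans (le_of_eq ?_) (mul_le_mul_of_nonneg_right hlc hpos)
  rw [Nat.cast_add_choose, Nat.cast_add_choose]
  have : ((n + a).factorial : ℝ) ≠ 0 := by positivity
  have : ((n + b).factorial : ℝ) ≠ 0 := by positivity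
  have : (n.factorial : ℝ) ≠ 0 := by positivity
  have : (a.factorial : ℝ) ≠ 0 := by positivity
  have : (b.factorial : ℝ) ≠ 0 := by positivity
  field_simp

/-- Log-concavity and the inequality of arithmetic and geometric means bound one summand. -/
lemma summand_le {n ν : ℕ} {μ : ℤ} (h1 : -(ν : ℤ) ≤ μ) (h2 : μ ≤ ν) (x y : ℝ) :
    (((n : ℤ) + ν - μ).toNat.choose n : ℝ) *
        (|assocLegendre (n + ν) μ x| * |assocLegendre ν (-μ) y|)
      ≤ ((n + ν).choose n : ℝ) * ((legSq (n + ν) μ x + legSq ν (-μ) y) / 2) := by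
  have hc := choose_sq_le (n := n) h1 h2
  have hx := legSq_nonneg (n + ν) μ x
  have hy := legSq_nonneg ν (-μ) y
  refine (sq_le_sq₀ (by positivity) (by positivity)).1 ?_
  calc _ = (((n : ℤ) + ν - μ).toNat.choose n : ℝ) ^ 2 *
        (assocLegendre (n + ν) μ x ^ 2 * assocLegendre ν (-μ) y ^ 2) := by
        rw [mul_pow, mul_pow, sq_abs, sq_abs]
    _ ≤ _ := mul_le_mul_of_nonneg_right hc (by positivity)
    _ = ((n + ν).choose n : ℝ) ^ 2 * (legSq (n + ν) μ x * legSq ν (-μ) y) := by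
        simp only [legSq]; ring
    _ ≤ ((n + ν).choose n : ℝ) ^ 2 * ((legSq (n + ν) μ x + legSq ν (-μ) y) / 2) ^ 2 := by
        gcongr
        nlinarith [sq_nonneg (legSq (n + ν) μ x - legSq ν (-μ) y)]
    _ = _ := by ring

/-! ### Spherical harmonics and the final estimate -/

lemma normA_pos (n : ℕ) (m : ℤ) : 0 < normA n m := by
  unfold normA; positivity

lemma norm_sphHarm (n : ℕ) (m : ℤ) (ξ : E3) :
    ‖sphHarm n m ξ‖ = normA n m * |assocLegendre n m (ξ 2)| := by
  have h : ∀ a : ℝ, ‖Complex.exp ((m : ℂ) * (a : ℂ) * Complex.I)‖ = 1 := fun a => by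
    have := Complex.norm_exp_ofReal_mul_I (m * a)
    push_cast at this
    exact this
  rw [sphHarm, norm_mul, norm_mul, h, Complex.norm_real, Complex.norm_real, Real.norm_eq_abs,
    Real.norm_eq_abs, abs_of_pos (normA_pos n m), mul_one]

lemma abs_normalized_le_one (x : E3) : |(‖x‖⁻¹ • x) 2| ≤ 1 := by
  rw [← Real.norm_eq_abs]
  refine (PiLp.norm_apply_le _ _).trans ?_
  rw [norm_smul, norm_inv, norm_norm]
  exact inv_mul_le_one

/-- The `ν`-th term of the local expansion of `I_n^0` about `c`
satisfies `|S^I_{n,ν}(c,t)| ≤ √((2n+1)/(4π)) C(n+ν,n) ‖c‖^{−(n+ν+1)} ‖t−c‖^ν`. -/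
theorem statement15 (n ν : ℕ) (c t : E3) (hc : c ≠ 0) (htc : t ≠ c) :
    ‖termSI n ν c t‖ ≤
      Real.sqrt ((2 * n + 1) / (4 * π)) * ((n + ν).choose n : ℝ) *
        (‖c‖ ^ (n + ν + 1))⁻¹ * ‖t - c‖ ^ ν := by
  set x : ℝ := (‖c‖⁻¹ • c) 2
  set y : ℝ := (‖t - c‖⁻¹ • (t - c)) 2
  set K : ℝ := (‖c‖ ^ (n + ν + 1))⁻¹ * ‖t - c‖ ^ ν with hK
  have hK0 : 0 ≤ K := by positivity
  have hA : normA n 0 = Real.sqrt ((2 * n + 1) / (4 * π)) := by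
    have : (n.factorial : ℝ) ≠ 0 := by positivity
    simp [normA, this]
  have hterm : ∀ μ : ℤ, ‖(-1 : ℂ) ^ ((ν : ℤ) - μ) *
        (((((n : ℤ) + ν - μ).toNat.choose n : ℝ)) : ℂ) *
        (solidI (n + ν) μ c * solidR ν (-μ) (t - c)) /
          (((normA (n + ν) μ : ℝ) : ℂ) * ((normA ν (-μ) : ℝ) : ℂ))‖
      = K * ((((n : ℤ) + ν - μ).toNat.choose n : ℝ) *
        (|assocLegendre (n + ν) μ x| * |assocLegendre ν (-μ) y|)) := by
    intro μ
    have p1 := normA_pos (n + ν) μ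
    have p2 := normA_pos ν (-μ)
    rw [norm_div, norm_mul, norm_mul, norm_mul, norm_mul, norm_zpow, norm_neg, norm_one, one_zpow,
      solidI, solidR, norm_mul, norm_mul, norm_sphHarm, norm_sphHarm]
    simp only [Complex.norm_real, Real.norm_eq_abs, abs_of_pos p1, abs_of_pos p2]
    rw [abs_of_nonneg (by positivity : (0 : ℝ) ≤ (‖c‖ ^ (n + ν + 1))⁻¹),
      abs_of_nonneg (by positivity : (0 : ℝ) ≤ ‖t - c‖ ^ ν), Nat.abs_cast, hK,
      div_eq_iff (by positivity)]
    ring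
  have hsum1 : ∑ μ ∈ Finset.Icc (-(ν : ℤ)) (ν : ℤ), legSq (n + ν) μ x ≤ 1 := by
    rw [← unsold (n + ν) (abs_normalized_le_one c)]
    refine Finset.sum_le_sum_of_subset_of_nonneg ?_ fun μ _ _ => legSq_nonneg _ _ _
    apply Finset.Icc_subset_Icc <;> omega
  have hsum2 : ∑ μ ∈ Finset.Icc (-(ν : ℤ)) (ν : ℤ), legSq ν (-μ) y = 1 := by
    rw [← unsold ν (abs_normalized_le_one (t - c))]
    refine Finset.sum_nbij' (fun μ => -μ) (fun μ => -μ) (fun μ hμ => ?_) (fun μ hμ => ?_)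
      (fun μ _ => neg_neg μ) (fun μ _ => neg_neg μ) (fun _ _ => rfl) <;>
      (rw [Finset.mem_Icc] at hμ ⊢; omega)
  calc ‖termSI n ν c t‖
      ≤ normA n 0 * ∑ μ ∈ Finset.Icc (-(ν : ℤ)) (ν : ℤ),
          K * (((n + ν).choose n : ℝ) * ((legSq (n + ν) μ x + legSq ν (-μ) y) / 2)) := by
        rw [termSI, norm_mul, Complex.norm_real, Real.norm_eq_abs, abs_of_pos (normA_pos n 0)]
        refine mul_le_mul_of_nonneg_left ?_ (normA_pos n 0).le
        refine norm_sum_le_of_le _ fun μ hμ => ?_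
        rw [Finset.mem_Icc] at hμ
        rw [hterm]
        exact mul_le_mul_of_nonneg_left (summand_le hμ.1 hμ.2 x y) hK0
    _ = normA n 0 * (K * (((n + ν).choose n : ℝ) *
          ((∑ μ ∈ Finset.Icc (-(ν : ℤ)) (ν : ℤ), legSq (n + ν) μ x + 1) / 2))) := by
        rw [← hsum2, ← Finset.sum_add_distrib, Finset.sum_div, ← Finset.mul_sum, ← Finset.mul_sum]
    _ ≤ normA n 0 * (K * (((n + ν).choose n : ℝ) * 1)) := by
        have := (normA_pos n 0).le
        gcongr
        linarith
    _ = _ := by rw [hA, hK]; ring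

end Paper
end
end
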